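/- arXiv:1106.0082 — 3 statements merged into one kernel-verified Lean document; each statement's English description precedes it below -/
import Mathlib

section
/- Let F be a linearly closed differential field of characteristic zero with derivation ∂ and constants C = {c ∈ F : ∂c = 0}, and let M : F^ℓ → F^ℓ be an ℓ×ℓ matrix differential operator over F. Then the following are equivalent: (i) the kernel {u ∈ F^ℓ : Mu = 0} is finite-dimensional over C; (ii) the image M(F^ℓ) has finite codimension over C in F^ℓ; (iii) M : F^ℓ → F^ℓ is surjective. -/
/-- A derivation on a field: an additive map satisfying the Leibniz rule. -/
structure IsDerivation {F : Type*} [Field F] (d : F → F) : Prop where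
  map_add : ∀ a b : F, d (a + b) = d a + d b
  leibniz : ∀ a b : F, d (a * b) = d a * b + a * d b

/-- A differential field `(F, d)` is linearly closed if every linear differential equation
`a_M d^M u + ⋯ + a_1 d u + a_0 u = b` with `a_M ≠ 0` has a solution in `F`,
and has a nonzero solution for `b = 0`, provided that `M ≥ 1`. -/
def LinearlyClosed {F : Type*} [Field F] (d : F → F) : Prop :=
  ∀ (M : ℕ) (a : ℕ → F), a M ≠ 0 →
    (∀ b : F, ∃ u : F, ∑ n ∈ Finset.range (M + 1), a n * d^[n] u = b) ∧
    (1 ≤ M → ∃ u : F, u ≠ 0 ∧ ∑ n ∈ Finset.range (M + 1), a n * d^[n] u = 0)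

/-- The `ℓ×ℓ` matrix differential operator with coefficients `a i j n` (nonzero only for
`n ≤ N`): `(Mu)_i = Σ_j Σ_{n=0}^N a_{ij,n} d^n (u j)`. -/
noncomputable def matDiffOp {F : Type*} [Field F] (d : F → F) {l : ℕ} (N : ℕ)
    (a : Fin l → Fin l → ℕ → F) (u : Fin l → F) : Fin l → F :=
  fun i => ∑ j, ∑ n ∈ Finset.range (N + 1), a i j n * d^[n] (u j)

/-!
Over a linearly surjective differential field every nonzero scalar differential operator is
surjective, and its kernel is finite-dimensional because a solution `u ≠ 0` splits off the right
factor `∂ - ∂u / u`. Hence every scalar operator satisfies the dichotomy: surjective with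
finite-dimensional kernel, or infinite-dimensional kernel and cokernel.

Leading terms of differential operators can be cancelled by left multiplication, so invertible row
operations leave a single nonzero entry in the first column of a matrix operator. Such a matrix is
an extension of its minor by a scalar operator, and by the snake lemma the dichotomy is inherited
by extensions, so induction on the size of the matrix concludes.
-/

open Function
open scoped Matrix

/-- A linear map satisfies the Fredholm dichotomy if it is surjective with finitely generated
kernel, or else neither its kernel nor its cokernel is finitely generated. Unlike the bare
equivalence of these two finiteness conditions, this property passes to extensions. -/
def FredholmDichotomy {R V W : Type*} [Ring R] [AddCommGroup V] [Module R V] [AddCommGroup W]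
    [Module R W] (f : V →ₗ[R] W) : Prop :=
  (Surjective f ∧ Module.Finite R f.ker) ∨
    (¬ Module.Finite R f.ker ∧ ¬ Module.Finite R (W ⧸ f.range))

theorem finite_coker_of_surjective {R V W : Type*} [Ring R] [AddCommGroup V] [Module R V]
    [AddCommGroup W] [Module R W] {f : V →ₗ[R] W} (hf : Surjective f) :
    Module.Finite R (W ⧸ f.range) := by
  rw [LinearMap.range_eq_top.2 hf]
  infer_instance

namespace FredholmDichotomy

variable {R V W W' : Type*} [Ring R] [AddCommGroup V] [Module R V] [AddCommGroup W] [Module R W]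
  [AddCommGroup W'] [Module R W'] {f : V →ₗ[R] W}

theorem finite_coker_iff_surjective (hf : FredholmDichotomy f) :
    Module.Finite R (W ⧸ f.range) ↔ Surjective f :=
  ⟨fun h => hf.elim (·.1) (absurd h ·.2), finite_coker_of_surjective⟩

theorem finite_ker_iff_surjective (hf : FredholmDichotomy f) :
    Module.Finite R f.ker ↔ Surjective f :=
  ⟨fun h => hf.elim (·.1) (absurd h ·.1),
    fun h => hf.elim (·.2) (absurd (finite_coker_of_surjective h) ·.2)⟩

theorem of_equiv_comp (e : W ≃ₗ[R] W') (h : FredholmDichotomy (e.toLinearMap ∘ₗ f)) :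
    FredholmDichotomy f := by
  have hcoker : Module.Finite R (W ⧸ f.range) ↔
      Module.Finite R (W' ⧸ (e.toLinearMap ∘ₗ f).range) :=
    Module.Finite.equiv_iff (Submodule.Quotient.equiv _ _ e (LinearMap.range_comp ..).symm)
  rw [FredholmDichotomy, LinearEquiv.ker_comp, ← hcoker] at h
  simpa [FredholmDichotomy] using h

theorem zero (hV : ¬ Module.Finite R V) (hW : ¬ Module.Finite R W) :
    FredholmDichotomy (0 : V →ₗ[R] W) := by
  refine .inr ⟨fun h => hV ?_, fun h => hW ?_⟩
  · rw [LinearMap.ker_zero] at h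
    exact Module.Finite.equiv Submodule.topEquiv
  · rw [LinearMap.range_zero] at h
    exact Module.Finite.equiv (Submodule.quotEquivOfEqBot _ rfl)

end FredholmDichotomy

section ShortExact

variable {R M₁ M₂ M₃ N₁ N₂ N₃ : Type*} [CommRing R]
  [AddCommGroup M₁] [Module R M₁] [AddCommGroup M₂] [Module R M₂] [AddCommGroup M₃] [Module R M₃]
  [AddCommGroup N₁] [Module R N₁] [AddCommGroup N₂] [Module R N₂] [AddCommGroup N₃] [Module R N₃]
  {f₁ : M₁ →ₗ[R] N₁} {f₂ : M₂ →ₗ[R] N₂} {f₃ : M₃ →ₗ[R] N₃}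
  {i : M₁ →ₗ[R] M₂} {p : M₂ →ₗ[R] M₃} {j : N₁ →ₗ[R] N₂} {q : N₂ →ₗ[R] N₃}

theorem surjective_middle_of_exact (hp : Surjective p) (hjq : Exact j q) (hq : Surjective q)
    (hl : j ∘ₗ f₁ = f₂ ∘ₗ i) (hr : q ∘ₗ f₂ = f₃ ∘ₗ p) (h₁ : Surjective f₁) (h₃ : Surjective f₃) :
    Surjective f₂ := by
  refine LinearMap.surjective_of_surjective_of_surjective_of_injective i p (0 : M₃ →ₗ[R] Unit)
    j q (0 : N₃ →ₗ[R] Unit) f₁ f₂ f₃ 0 hl hr rfl ?_ hjq ?_ h₁ h₃ (injective_of_subsingleton _)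
  · exact (p.exact_zero_iff_surjective Unit).2 hp
  · exact (q.exact_zero_iff_surjective Unit).2 hq

theorem finite_coker_right_of_exact (hq : Surjective q) (hr : q ∘ₗ f₂ = f₃ ∘ₗ p)
    (h₂ : Module.Finite R (N₂ ⧸ f₂.range)) : Module.Finite R (N₃ ⧸ f₃.range) := by
  have hle : f₂.range ≤ f₃.range.comap q := by
    rintro _ ⟨x, rfl⟩
    exact ⟨p x, (DFunLike.congr_fun hr x).symm⟩
  refine Module.Finite.of_surjective (f₂.range.mapQ f₃.range q hle) (LinearMap.range_eq_top.1 ?_)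
  rw [Submodule.range_mapQ, LinearMap.range_eq_top.2 hq, Submodule.map_top, Submodule.range_mkQ]

variable [IsNoetherianRing R]

theorem finite_ker_left_of_exact (hi : Injective i) (hl : j ∘ₗ f₁ = f₂ ∘ₗ i)
    (h₂ : Module.Finite R f₂.ker) : Module.Finite R f₁.ker := by
  have hmap : ∀ x ∈ f₁.ker, i x ∈ f₂.ker := fun x hx => by
    simpa [LinearMap.mem_ker.1 hx] using (DFunLike.congr_fun hl x).symm
  exact Module.Finite.of_injective (i.restrict hmap) fun _ _ h =>
    Subtype.ext (hi (congrArg Subtype.val h))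

theorem finite_ker_middle_of_exact (hip : Exact i p) (hj : Injective j) (hl : j ∘ₗ f₁ = f₂ ∘ₗ i)
    (hr : q ∘ₗ f₂ = f₃ ∘ₗ p) (h₁ : Module.Finite R f₁.ker) (h₃ : Module.Finite R f₃.ker) :
    Module.Finite R f₂.ker := by
  have hmap : f₂.ker.map p ≤ f₃.ker := by
    rintro _ ⟨x, hx, rfl⟩
    simpa [LinearMap.mem_ker.1 hx] using (DFunLike.congr_fun hr x).symm
  have hinf : f₂.ker ⊓ p.ker ≤ f₁.ker.map i := by
    rintro x ⟨hx, hpx⟩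
    obtain ⟨y, rfl⟩ := (hip x).1 hpx
    exact ⟨y, hj (by simpa [LinearMap.mem_ker.1 hx] using DFunLike.congr_fun hl y), rfl⟩
  exact Module.Finite.of_fg (Submodule.fg_of_fg_map_of_fg_inf_ker p
    (.of_le_of_isNoetherian hmap) (.of_le_of_isNoetherian hinf))

theorem finite_ker_right_of_exact (hip : Exact i p) (hp : Surjective p) (hjq : Exact j q)
    (hl : j ∘ₗ f₁ = f₂ ∘ₗ i) (hr : q ∘ₗ f₂ = f₃ ∘ₗ p) (h₁ : Surjective f₁)
    (h₂ : Module.Finite R f₂.ker) : Module.Finite R f₃.ker := by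
  suffices hle : f₃.ker ≤ f₂.ker.map p from .of_fg (.of_le_of_isNoetherian hle)
  intro x hx
  obtain ⟨y, rfl⟩ := hp x
  obtain ⟨z, hz⟩ := (hjq (f₂ y)).1 ((DFunLike.congr_fun hr y).trans hx)
  obtain ⟨w, rfl⟩ := h₁ z
  have hw : f₂ (i w) = f₂ y := (DFunLike.congr_fun hl w).symm.trans hz
  refine ⟨y - i w, ?_, ?_⟩
  · rw [SetLike.mem_coe, LinearMap.mem_ker, map_sub, hw, sub_self]
  · rw [map_sub, hip.apply_apply_eq_zero, sub_zero]

theorem finite_coker_left_of_exact (hip : Exact i p) (hp : Surjective p) (hj : Injective j)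
    (hjq : Exact j q) (hl : j ∘ₗ f₁ = f₂ ∘ₗ i) (hr : q ∘ₗ f₂ = f₃ ∘ₗ p)
    (h₂ : Module.Finite R (N₂ ⧸ f₂.range)) (h₃ : Module.Finite R f₃.ker) :
    Module.Finite R (N₁ ⧸ f₁.range) := by
  have hle : f₁.range ≤ f₂.range.comap j := by
    rintro _ ⟨x, rfl⟩
    exact ⟨i x, (DFunLike.congr_fun hl x).symm⟩
  have hsnake := SnakeLemma.exact_δ'_left f₁ f₂ f₃ i p hip j q hjq hl hr
    f₃.ker.subtype f₃.exact_subtype_ker_map f₁.range.mkQ f₁.exact_map_mkQ_range f₂.range.mkQ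
    f₂.exact_map_mkQ_range hp hj (f₁.range.mapQ f₂.range j hle) (Submodule.mapQ_mkQ ..)
    (Submodule.mkQ_surjective _)
  have := isNoetherian_of_range_eq_ker _ _ hsnake.linearMap_ker_eq.symm
  infer_instance

theorem FredholmDichotomy.of_exact (hi : Injective i) (hip : Exact i p) (hp : Surjective p)
    (hj : Injective j) (hjq : Exact j q) (hq : Surjective q) (hl : j ∘ₗ f₁ = f₂ ∘ₗ i)
    (hr : q ∘ₗ f₂ = f₃ ∘ₗ p) (h₁ : FredholmDichotomy f₁) (h₃ : FredholmDichotomy f₃) :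
    FredholmDichotomy f₂ := by
  rcases h₁ with ⟨surj₁, ker₁⟩ | ⟨ker₁, coker₁⟩ <;> rcases h₃ with ⟨surj₃, ker₃⟩ | ⟨ker₃, coker₃⟩
  · exact .inl ⟨surjective_middle_of_exact hp hjq hq hl hr surj₁ surj₃,
      finite_ker_middle_of_exact hip hj hl hr ker₁ ker₃⟩
  · exact .inr ⟨ker₃ ∘ finite_ker_right_of_exact hip hp hjq hl hr surj₁,
      coker₃ ∘ finite_coker_right_of_exact hq hr⟩
  · exact .inr ⟨ker₁ ∘ finite_ker_left_of_exact hi hl,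
      fun h => coker₁ (finite_coker_left_of_exact hip hp hj hjq hl hr h ker₃)⟩
  · exact .inr ⟨ker₁ ∘ finite_ker_left_of_exact hi hl, coker₃ ∘ finite_coker_right_of_exact hq hr⟩

end ShortExact

theorem exact_single_funLeft_succAbove (C F : Type*) [Semiring C] [AddCommMonoid F] [Module C F]
    {n : ℕ} (m : Fin (n + 1)) :
    Exact (LinearMap.single C (fun _ => F) m) (LinearMap.funLeft C F m.succAbove) := by
  intro u
  refine ⟨fun hu => ⟨u m, ?_⟩, ?_⟩
  · ext i
    rcases m.eq_self_or_eq_succAbove i with rfl | ⟨i, rfl⟩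
    · simp
    · simpa using (congrFun hu i).symm
  · rintro ⟨x, rfl⟩
    ext i
    simp [LinearMap.funLeft_apply]

section MatrixAction

variable (C : Type*) {R F : Type*} [CommRing C] [Ring R] [AddCommGroup F] [Module C F] [Module R F]
  [SMulCommClass R C F]

/-- The ring homomorphism by which square matrices over `R` act on columns with entries in an
`R`-module `F`; here `R` is noncommutative and its action commutes with that of `C`. -/
noncomputable def matrixAction (ι : Type*) [Fintype ι] [DecidableEq ι] :
    Matrix ι ι R →+* Module.End C (ι → F) :=
  (endVecRingEquivMatrixEnd ι C F).symm.toRingHom.comp (Module.toModuleEnd C F).mapMatrix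

theorem matrixAction_apply {ι : Type*} [Fintype ι] [DecidableEq ι] (M : Matrix ι ι R) (u : ι → F)
    (i : ι) : matrixAction C ι M u i = ∑ j, M i j • u j :=
  rfl

theorem FredholmDichotomy.of_unit_mul {ι : Type*} [Fintype ι] [DecidableEq ι]
    (U : (Matrix ι ι R)ˣ) {M : Matrix ι ι R}
    (h : FredholmDichotomy (matrixAction C ι (U.val * M) : Module.End C (ι → F))) :
    FredholmDichotomy (matrixAction C ι M : Module.End C (ι → F)) := by
  refine .of_equiv_comp
    (LinearMap.GeneralLinearGroup.toLinearEquiv (Units.map (matrixAction C ι).toMonoidHom U)) ?_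
  rwa [map_mul] at h

theorem FredholmDichotomy.of_col_zero_eq_single [IsNoetherianRing C] {n : ℕ}
    {M : Matrix (Fin (n + 1)) (Fin (n + 1)) R} {k : Fin (n + 1)} {r : R}
    (hM : M.col 0 = Pi.single k r) (hr : FredholmDichotomy (Module.toModuleEnd C F r))
    (hminor : FredholmDichotomy
      (matrixAction C (Fin n) (M.submatrix k.succAbove Fin.succ) : Module.End C (Fin n → F))) :
    FredholmDichotomy (matrixAction C (Fin (n + 1)) M : Module.End C (Fin (n + 1) → F)) := by
  replace hM (i) : M i 0 = (Pi.single k r : Fin (n + 1) → R) i := congrFun hM i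
  have hinj (m : Fin (n + 1)) : Injective (LinearMap.single C (fun _ => F) m) :=
    Pi.single_injective (M := fun _ => F) m
  have hexact := exact_single_funLeft_succAbove C F (n := n)
  have hsurj (m : Fin (n + 1)) : Surjective (LinearMap.funLeft C F m.succAbove) :=
    LinearMap.funLeft_surjective_of_injective _ _ _ m.succAbove_right_injective
  refine .of_exact (hinj 0) (hexact 0) (hsurj 0) (hinj k) (hexact k) (hsurj k) ?_ ?_ hr hminor
  · ext x i
    rcases k.eq_self_or_eq_succAbove i with rfl | ⟨i, rfl⟩
    all_goals simp [matrixAction_apply, Pi.single_apply, hM]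
  · refine LinearMap.ext fun u => funext fun i => ?_
    simp [matrixAction_apply, LinearMap.funLeft_apply, Fin.sum_univ_succ, hM]

end MatrixAction

section ColumnClearing

variable {R ι : Type*} [Ring R] [Fintype ι] [DecidableEq ι]

theorem isUnit_one_add_single {i j : ι} (hij : i ≠ j) (r : R) :
    IsUnit (1 + Matrix.single i j r) :=
  IsNilpotent.isUnit_one_add ⟨2, by simp [sq, hij.symm]⟩

theorem exists_unit_mulVec_eq_single [Nonempty ι] (δ : R → ℕ)
    (hδ : ∀ a b, b ≠ 0 → δ b ≤ δ a → ∃ q, δ (a - q * b) < δ a) (v : ι → R) :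
    ∃ (U : (Matrix ι ι R)ˣ) (k : ι) (r : R), U.val *ᵥ v = Pi.single k r := by
  induction hs : ∑ i, δ (v i) using Nat.strong_induction_on generalizing v with | h s ih
  subst hs
  by_cases hv : ∃ i j, i ≠ j ∧ v i ≠ 0 ∧ v j ≠ 0
  · obtain ⟨i, j, hij, hj, hle⟩ : ∃ i j, i ≠ j ∧ v j ≠ 0 ∧ δ (v j) ≤ δ (v i) := by
      obtain ⟨i, j, hij, hi, hj⟩ := hv
      rcases le_total (δ (v j)) (δ (v i)) with h | h
      exacts [⟨i, j, hij, hj, h⟩, ⟨j, i, hij.symm, hi, h⟩]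
    obtain ⟨q, hq⟩ := hδ (v i) (v j) hj hle
    obtain ⟨E, hE⟩ := isUnit_one_add_single hij (-q)
    have hEv : E.val *ᵥ v = Function.update v i (v i - q * v j) := by
      ext m
      rcases eq_or_ne m i with rfl | hm <;>
        simp [Matrix.add_mulVec, Matrix.single_mulVec, sub_eq_add_neg, *]
    have hlt : ∑ m, δ ((E.val *ᵥ v) m) < ∑ m, δ (v m) := by
      rw [hEv]
      refine Finset.sum_lt_sum (fun m _ => ?_) ⟨i, Finset.mem_univ i, by simpa using hq⟩
      rcases eq_or_ne m i with rfl | hm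
      · simpa using hq.le
      · simp [hm]
    obtain ⟨U, k, r, hU⟩ := ih _ hlt _ rfl
    exact ⟨U * E, k, r, by rw [Units.val_mul, ← Matrix.mulVec_mulVec, hU]⟩
  · push Not at hv
    rcases eq_or_ne v 0 with rfl | hv0
    · exact ⟨1, Classical.arbitrary ι, 0, by simp⟩
    · obtain ⟨k, hk⟩ := Function.ne_iff.1 hv0
      refine ⟨1, k, v k, ?_⟩
      ext i
      rcases eq_or_ne i k with rfl | hik
      · simp
      · simpa [hik] using by_contra fun hi => hk (hv i k hik hi)

end ColumnClearing

theorem fredholmDichotomy_matrixAction (C : Type*) {R F : Type*} [CommRing C] [IsNoetherianRing C]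
    [Ring R] [AddCommGroup F] [Module C F] [Module R F] [SMulCommClass R C F] (δ : R → ℕ)
    (hδ : ∀ a b, b ≠ 0 → δ b ≤ δ a → ∃ q, δ (a - q * b) < δ a)
    (hscalar : ∀ r : R, FredholmDichotomy (Module.toModuleEnd C F r)) {n : ℕ}
    (M : Matrix (Fin n) (Fin n) R) :
    FredholmDichotomy (matrixAction C (Fin n) M : Module.End C (Fin n → F)) := by
  induction n with
  | zero => exact .inl ⟨fun _ => ⟨0, Subsingleton.elim ..⟩, inferInstance⟩
  | succ n ih =>
    obtain ⟨U, k, r, hU⟩ := exists_unit_mulVec_eq_single δ hδ (M.col 0)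
    exact .of_unit_mul C U (.of_col_zero_eq_single C hU (hscalar r) (ih _))

/-- A map `d : F → F` is linearly surjective if every inhomogeneous linear equation in `d` with
nonzero leading coefficient has a solution. -/
def LinearlySurjective {F : Type*} [Field F] (d : F → F) : Prop :=
  ∀ (M : ℕ) (a : ℕ → F), a M ≠ 0 →
    ∀ b : F, ∃ u : F, ∑ n ∈ Finset.range (M + 1), a n * d^[n] u = b

section DifferentialOperator

variable {C F : Type*} [CommRing C]

section CommRing

variable [CommRing F] [Algebra C F] (D : Derivation C F F)

/-- The differential operators over `F` of order less than `n`, as an `F`-submodule of the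
`C`-linear endomorphisms of `F`. -/
def diffOpLT (n : ℕ) : Submodule F (Module.End C F) :=
  Submodule.span F ((fun k => (D.toLinearMap : Module.End C F) ^ k) '' Set.Iio n)

variable {D} {m n : ℕ} {P Q : Module.End C F}

theorem diffOpLT_mono (h : m ≤ n) : diffOpLT D m ≤ diffOpLT D n :=
  Submodule.span_mono (Set.image_mono (Set.Iio_subset_Iio h))

theorem mem_diffOpLT_zero : P ∈ diffOpLT D 0 ↔ P = 0 := by
  simp [diffOpLT]

theorem mem_diffOpLT_iff_exists_sum :
    P ∈ diffOpLT D n ↔ ∃ c : ℕ → F, ∑ k ∈ Finset.range n, c k • D.toLinearMap ^ k = P := by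
  rw [diffOpLT, ← Finset.coe_range, Submodule.mem_span_image_finset_iff_exists_fun']

theorem mem_diffOpLT_succ :
    P ∈ diffOpLT D (n + 1) ↔ ∃ a : F, P - a • D.toLinearMap ^ n ∈ diffOpLT D n := by
  rw [diffOpLT, ← Order.succ_eq_add_one, Order.Iio_succ_eq_insert, Set.image_insert_eq,
    Submodule.mem_span_insert']
  exact neg_surjective.exists.trans (by simp [diffOpLT, sub_eq_add_neg])

theorem smul_pow_mem_diffOpLT (a : F) (h : m < n) : a • D.toLinearMap ^ m ∈ diffOpLT D n :=
  Submodule.smul_mem _ _ (Submodule.subset_span ⟨m, h, rfl⟩)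

theorem derivation_mul_smul (a : F) (P : Module.End C F) :
    D.toLinearMap * (a • P) = a • (D.toLinearMap * P) + D a • P := by
  ext x
  simp [mul_comm]

theorem derivation_mul_mem_diffOpLT (hP : P ∈ diffOpLT D n) :
    D.toLinearMap * P ∈ diffOpLT D (n + 1) := by
  induction hP using Submodule.span_induction with
  | mem _ h =>
    obtain ⟨k, hk, rfl⟩ := h
    simpa [pow_succ'] using smul_pow_mem_diffOpLT (D := D) 1 (Nat.succ_lt_succ hk)
  | zero => simp
  | add _ _ _ _ hP hQ => rw [mul_add]; exact add_mem hP hQ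
  | smul a P h hP =>
    rw [derivation_mul_smul]
    exact add_mem (Submodule.smul_mem _ _ hP)
      (Submodule.smul_mem _ _ (diffOpLT_mono n.le_succ h))

theorem pow_mul_sub_smul_pow_mem_diffOpLT {a : F} (h : P - a • D.toLinearMap ^ n ∈ diffOpLT D n)
    (k : ℕ) : D.toLinearMap ^ k * P - a • D.toLinearMap ^ (k + n) ∈ diffOpLT D (k + n) := by
  induction k with
  | zero => simpa using h
  | succ k ih =>
    have hstep : D.toLinearMap ^ (k + 1) * P - a • D.toLinearMap ^ (k + 1 + n) =
        D.toLinearMap * (D.toLinearMap ^ k * P - a • D.toLinearMap ^ (k + n)) +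
          D a • D.toLinearMap ^ (k + n) := by
      rw [mul_sub, derivation_mul_smul, ← mul_assoc, ← pow_succ', ← pow_succ', add_right_comm k]
      abel
    rw [hstep, add_right_comm]
    exact add_mem (derivation_mul_mem_diffOpLT ih) (smul_pow_mem_diffOpLT _ (Nat.lt_succ_self _))

theorem pow_mul_mem_diffOpLT (hP : P ∈ diffOpLT D n) (k : ℕ) :
    D.toLinearMap ^ k * P ∈ diffOpLT D (k + n) := by
  simpa using pow_mul_sub_smul_pow_mem_diffOpLT (a := (0 : F)) (n := n) (by simpa using hP) k

theorem mul_mem_diffOpLT (hP : P ∈ diffOpLT D m) (hQ : Q ∈ diffOpLT D n) :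
    P * Q ∈ diffOpLT D (m + n) := by
  induction hP using Submodule.span_induction with
  | mem _ h =>
    obtain ⟨k, hk, rfl⟩ := h
    exact diffOpLT_mono (Nat.add_le_add_right (le_of_lt hk) n) (pow_mul_mem_diffOpLT hQ k)
  | zero => simp
  | add _ _ _ _ h₁ h₂ => rw [add_mul]; exact add_mem h₁ h₂
  | smul a _ _ h => rw [smul_mul_assoc]; exact Submodule.smul_mem _ _ h

theorem exists_eq_mul_sub_smul_one_add_smul_one (b : F) (hP : P ∈ diffOpLT D (n + 1)) :
    ∃ Q ∈ diffOpLT D n, ∃ c : F, P = Q * (D.toLinearMap - b • 1) + c • 1 := by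
  induction n generalizing P with
  | zero =>
    obtain ⟨a, ha⟩ := mem_diffOpLT_succ.1 hP
    exact ⟨0, zero_mem _, a, by simpa [sub_eq_zero] using mem_diffOpLT_zero.1 ha⟩
  | succ n ih =>
    obtain ⟨a, ha⟩ := mem_diffOpLT_succ.1 hP
    have hrest : P - a • D.toLinearMap ^ n * (D.toLinearMap - b • 1) ∈ diffOpLT D (n + 1) := by
      have hb : b • 1 ∈ diffOpLT D 1 := by simpa using smul_pow_mem_diffOpLT (D := D) b one_pos
      convert add_mem ha (Submodule.smul_mem _ a (pow_mul_mem_diffOpLT hb n)) using 1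
      rw [mul_sub, smul_mul_assoc, smul_mul_assoc, ← pow_succ]
      abel
    obtain ⟨Q, hQ, c, h⟩ := ih hrest
    refine ⟨Q + a • D.toLinearMap ^ n, add_mem (diffOpLT_mono n.le_succ hQ)
      (smul_pow_mem_diffOpLT _ n.lt_succ_self), c, ?_⟩
    rw [add_mul, add_right_comm, ← h, sub_add_cancel]

variable (D) in
/-- The ring of linear differential operators over `F`, acting on `F` by `C`-linear maps. -/
def diffOpRing : Subring (Module.End C F) where
  carrier := {P | ∃ n, P ∈ diffOpLT D n}
  mul_mem' := fun ⟨_, hP⟩ ⟨_, hQ⟩ => ⟨_, mul_mem_diffOpLT hP hQ⟩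
  one_mem' := ⟨1, by simpa using smul_pow_mem_diffOpLT (D := D) 1 one_pos⟩
  add_mem' := fun ⟨m, hP⟩ ⟨n, hQ⟩ => ⟨max m n,
    add_mem (diffOpLT_mono (le_max_left m n) hP) (diffOpLT_mono (le_max_right m n) hQ)⟩
  zero_mem' := ⟨0, zero_mem _⟩
  neg_mem' := fun ⟨n, hP⟩ => ⟨n, neg_mem hP⟩

variable (D) in
/-- The least `n` such that `P` has order less than `n`: one more than the order of a nonzero
differential operator, and `0` for the zero operator. -/
noncomputable def diffOpLength (P : Module.End C F) : ℕ :=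
  sInf {n | P ∈ diffOpLT D n}

theorem diffOpLength_le (hP : P ∈ diffOpLT D n) : diffOpLength D P ≤ n :=
  Nat.sInf_le hP

theorem mem_diffOpLT_diffOpLength (hP : P ∈ diffOpRing D) : P ∈ diffOpLT D (diffOpLength D P) :=
  Nat.sInf_mem hP

theorem exists_diffOpLength_eq_succ (hP : P ∈ diffOpRing D) (h0 : P ≠ 0) :
    ∃ n, diffOpLength D P = n + 1 :=
  Nat.exists_eq_succ_of_ne_zero fun h =>
    h0 (mem_diffOpLT_zero.1 (h ▸ mem_diffOpLT_diffOpLength hP))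

end CommRing

section Field

variable [Field F] [Algebra C F] {D : Derivation C F F} {m n : ℕ} {P Q : Module.End C F}

theorem exists_sub_mul_mem_diffOpLT (hnm : n ≤ m) (hP : P ∈ diffOpLT D (m + 1))
    (hQ : Q ∈ diffOpLT D (n + 1)) (hQn : Q ∉ diffOpLT D n) :
    ∃ S ∈ diffOpRing D, P - S * Q ∈ diffOpLT D m := by
  obtain ⟨a, ha⟩ := mem_diffOpLT_succ.1 hP
  obtain ⟨b, hb⟩ := mem_diffOpLT_succ.1 hQ
  have hb0 : b ≠ 0 := by
    rintro rfl
    exact hQn (by simpa using hb)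
  refine ⟨(a / b) • D.toLinearMap ^ (m - n), ⟨_, smul_pow_mem_diffOpLT _ (Nat.lt_succ_self _)⟩, ?_⟩
  have hlead := pow_mul_sub_smul_pow_mem_diffOpLT hb (m - n)
  rw [Nat.sub_add_cancel hnm] at hlead
  convert sub_mem ha (Submodule.smul_mem _ (a / b) hlead) using 1
  rw [smul_sub, smul_smul, div_mul_cancel₀ a hb0, smul_mul_assoc]
  abel

theorem exists_diffOpLength_sub_mul_lt (P Q : diffOpRing D) (hQ : Q ≠ 0)
    (h : diffOpLength D Q.1 ≤ diffOpLength D P.1) :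
    ∃ S : diffOpRing D, diffOpLength D (P - S * Q).1 < diffOpLength D P.1 := by
  obtain ⟨n, hn⟩ := exists_diffOpLength_eq_succ Q.2 (by simpa using hQ)
  obtain ⟨m, hm⟩ := Nat.exists_eq_add_of_le (hn ▸ h)
  rw [Nat.add_right_comm] at hm
  obtain ⟨S, hS, hlt⟩ := exists_sub_mul_mem_diffOpLT (Nat.le_add_right n m)
    (hm ▸ mem_diffOpLT_diffOpLength P.2) (hn ▸ mem_diffOpLT_diffOpLength Q.2)
    fun h => absurd (diffOpLength_le h) (by omega)
  exact ⟨⟨S, hS⟩, (diffOpLength_le hlt).trans_lt (by omega)⟩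

theorem surjective_of_mem_diffOpRing (hD : LinearlySurjective D) (hP : P ∈ diffOpRing D)
    (h0 : P ≠ 0) : Surjective P := by
  obtain ⟨n, hn⟩ := exists_diffOpLength_eq_succ hP h0
  obtain ⟨c, rfl⟩ := mem_diffOpLT_iff_exists_sum.1 (hn ▸ mem_diffOpLT_diffOpLength hP)
  have hc : c n ≠ 0 := by
    intro hc
    rw [Finset.sum_range_succ, hc, zero_smul, add_zero] at hn
    have hle : diffOpLength D (∑ k ∈ Finset.range n, c k • D.toLinearMap ^ k) ≤ n :=
      diffOpLength_le (mem_diffOpLT_iff_exists_sum.2 ⟨c, rfl⟩)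
    omega
  intro b
  obtain ⟨u, hu⟩ := hD n c hc b
  exact ⟨u, by simpa [Module.End.pow_apply] using hu⟩

section Kernel

variable [IsNoetherianRing C] (hD : Module.Finite C D.toLinearMap.ker)

include hD

theorem finite_ker_sub_smul_one {u : F} (hu : u ≠ 0) :
    Module.Finite C (D.toLinearMap - (D u / u) • 1 : Module.End C F).ker := by
  suffices hle : (D.toLinearMap - (D u / u) • 1 : Module.End C F).ker ≤
      D.toLinearMap.ker.map (LinearMap.mulLeft C u) from .of_fg (.of_le_of_isNoetherian hle)
  intro x hx
  have hDx : D x = D u / u * x := sub_eq_zero.1 hx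
  have hquot : D (x / u) = 0 := by
    rw [D.leibniz_div, hDx, smul_eq_mul, smul_eq_mul, smul_eq_mul]
    field_simp
    ring
  exact ⟨x / u, hquot, by simp [mul_div_cancel₀ _ hu]⟩

theorem finite_ker_of_mem_diffOpLT (hP : P ∈ diffOpLT D n) (h0 : P ≠ 0) :
    Module.Finite C P.ker := by
  induction n generalizing P with
  | zero => exact absurd (mem_diffOpLT_zero.1 hP) h0
  | succ n ih =>
    rcases eq_or_ne P.ker ⊥ with hker | hker
    · rw [hker]
      infer_instance
    obtain ⟨u, hPu, hu⟩ := Submodule.exists_mem_ne_zero_of_ne_bot hker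
    obtain ⟨Q, hQ, c, rfl⟩ := exists_eq_mul_sub_smul_one_add_smul_one (D u / u) hP
    obtain rfl : c = 0 := by simpa [hu] using hPu
    rw [zero_smul, add_zero] at h0 ⊢
    have := ih hQ (left_ne_zero_of_mul h0)
    have := finite_ker_sub_smul_one hD hu
    rw [Module.End.mul_eq_comp, LinearMap.ker_comp]
    exact .of_fg (Submodule.fg_of_fg_map_of_fg_inf_ker (D.toLinearMap - (D u / u) • 1)
      (.of_le_of_isNoetherian (Submodule.map_comap_le ..)) (.of_le_of_isNoetherian inf_le_right))

end Kernel

theorem not_finite_of_linearlySurjective (hD : LinearlySurjective D) : ¬ Module.Finite C F := by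
  intro
  have hsurj : Surjective D := fun b => by
    obtain ⟨u, hu⟩ := hD 1 (Pi.single 1 1) (by simp) b
    exact ⟨u, by simpa [Finset.sum_range_succ] using hu⟩
  have hinj : Injective D :=
    OrzechProperty.injective_of_surjective_endomorphism D.toLinearMap hsurj
  exact one_ne_zero (hinj (D.map_one_eq_zero.trans D.map_zero.symm))

theorem fredholmDichotomy_of_mem_diffOpRing [IsNoetherianRing C] (hD : LinearlySurjective D)
    (hker : Module.Finite C D.toLinearMap.ker) (hP : P ∈ diffOpRing D) : FredholmDichotomy P := by
  rcases eq_or_ne P 0 with rfl | h0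
  · exact .zero (not_finite_of_linearlySurjective hD) (not_finite_of_linearlySurjective hD)
  · obtain ⟨n, hn⟩ := hP
    exact .inl ⟨surjective_of_mem_diffOpRing hD ⟨n, hn⟩ h0, finite_ker_of_mem_diffOpLT hker hn h0⟩

theorem fredholmDichotomy_matrix_diffOpRing [IsNoetherianRing C] (hD : LinearlySurjective D)
    (hker : Module.Finite C D.toLinearMap.ker) {l : ℕ}
    (M : Matrix (Fin l) (Fin l) (diffOpRing D)) :
    FredholmDichotomy (matrixAction C (Fin l) M : Module.End C (Fin l → F)) :=
  fredholmDichotomy_matrixAction C (fun P : diffOpRing D => diffOpLength D P.1)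
    exists_diffOpLength_sub_mul_lt (fun P => fredholmDichotomy_of_mem_diffOpRing hD hker P.2) M

end Field
end DifferentialOperator

section Constants

variable {F : Type*} [Field F] {d : F → F} {C : Subfield F}

/-- A derivation `d` of `F`, as a derivation over a subfield `C` of its constants. -/
def IsDerivation.toDerivation (hd : IsDerivation d) (hC : ∀ x ∈ C, d x = 0) : Derivation C F F :=
  Derivation.mk'
    { toFun := d
      map_add' := hd.map_add
      map_smul' := fun c x => by simp [Subfield.smul_def, hd.leibniz, hC c c.2] }
    fun a b => by simp [hd.leibniz, mul_comm, add_comm]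

theorem IsDerivation.finite_ker_toDerivation (hd : IsDerivation d) (hC : ∀ x, x ∈ C ↔ d x = 0) :
    Module.Finite C (hd.toDerivation fun x => (hC x).1).toLinearMap.ker := by
  suffices hle : (hd.toDerivation fun x => (hC x).1).toLinearMap.ker ≤ Submodule.span C {1} from
    Submodule.finiteDimensional_of_le hle
  exact fun x hx => Submodule.mem_span_singleton.2
    ⟨⟨x, (hC x).2 hx⟩, by simp [Subfield.smul_def]⟩

theorem exists_matrixAction_eq_matDiffOp (hd : IsDerivation d) (hC : ∀ x ∈ C, d x = 0) {l : ℕ}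
    (N : ℕ) (a : Fin l → Fin l → ℕ → F) :
    ∃ M : Matrix (Fin l) (Fin l) (diffOpRing (hd.toDerivation hC)),
      ⇑(matrixAction C (Fin l) M : Module.End C (Fin l → F)) = matDiffOp d N a := by
  let D := (hd.toDerivation hC).toLinearMap
  have hmem (i j) : ∑ n ∈ Finset.range (N + 1), a i j n • D ^ n ∈ diffOpRing (hd.toDerivation hC) :=
    ⟨N + 1, mem_diffOpLT_iff_exists_sum.2 ⟨a i j, rfl⟩⟩
  have hD (n : ℕ) (x : F) : (D ^ n) x = d^[n] x := Module.End.pow_apply D n x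
  refine ⟨.of fun i j => ⟨_, hmem i j⟩, ?_⟩
  ext u i
  simp [matrixAction_apply, matDiffOp, Subring.smul_def, hD]

end Constants

theorem stmt_4_general (F : Type*) [Field F] (d : F → F) (hd : IsDerivation d)
    (hls : LinearlySurjective d) (C : Subfield F) (hC : ∀ x : F, x ∈ C ↔ d x = 0)
    (l N : ℕ) (a : Fin l → Fin l → ℕ → F)
    (Ker Im : Submodule C (Fin l → F))
    (hKer : ∀ u : Fin l → F, u ∈ Ker ↔ matDiffOp d N a u = 0)
    (hIm : ∀ v : Fin l → F, v ∈ Im ↔ ∃ u : Fin l → F, matDiffOp d N a u = v) :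
    (Module.Finite C Ker ↔ Module.Finite C ((Fin l → F) ⧸ Im)) ∧
    (Module.Finite C ((Fin l → F) ⧸ Im) ↔ Function.Surjective (matDiffOp d N a)) := by
  obtain ⟨M, hM⟩ := exists_matrixAction_eq_matDiffOp hd (fun x => (hC x).1) N a
  have hdich := fredholmDichotomy_matrix_diffOpRing (D := hd.toDerivation fun x => (hC x).1) hls
    (hd.finite_ker_toDerivation hC) M
  rw [← hM] at hKer hIm ⊢
  obtain rfl : Ker = (matrixAction C (Fin l) M : Module.End C (Fin l → F)).ker := Submodule.ext hKer
  obtain rfl : Im = (matrixAction C (Fin l) M : Module.End C (Fin l → F)).range := Submodule.ext hIm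
  rw [hdich.finite_ker_iff_surjective, hdich.finite_coker_iff_surjective]
  exact ⟨Iff.rfl, Iff.rfl⟩

/-- Let `F` be a linearly closed differential field of characteristic zero with constants
`C`, and let `M` be an `ℓ×ℓ` matrix differential operator over `F`.  Then the following
are equivalent: (i) `ker M` is finite-dimensional over `C`; (ii) the image `M(F^ℓ)` has
finite codimension over `C` in `F^ℓ`; (iii) `M : F^ℓ → F^ℓ` is surjective. -/
theorem stmt_4 (F : Type*) [Field F] [CharZero F] (d : F → F) (hd : IsDerivation d)
    (hlc : LinearlyClosed d)
    (C : Subfield F) (hC : ∀ x : F, x ∈ C ↔ d x = 0)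
    (l N : ℕ) (a : Fin l → Fin l → ℕ → F)
    (Ker Im : Submodule C (Fin l → F))
    (hKer : ∀ u : Fin l → F, u ∈ Ker ↔ matDiffOp d N a u = 0)
    (hIm : ∀ v : Fin l → F, v ∈ Im ↔ ∃ u : Fin l → F, matDiffOp d N a u = v) :
    (Module.Finite C Ker ↔ Module.Finite C ((Fin l → F) ⧸ Im)) ∧
    (Module.Finite C ((Fin l → F) ⧸ Im) ↔ Function.Surjective (matDiffOp d N a)) :=
  stmt_4_general F d hd (fun M a ha => (hlc M a ha).1) C hC l N a Ker Im hKer hIm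
end

section
/- Let F be a linearly closed differential field of characteristic zero and let K(u) = Σ_{n=0}^N k_n ∂^n u be a nonzero scalar differential operator over F (k_0,…,k_N ∈ F, not all zero). Then for every scalar differential operator S over F that is skewadjoint, i.e., S*(u) = −S(u) for all u ∈ F, there exists a scalar differential operator P over F such that K(P(u)) − P*(K*(u)) = S(u) for all u ∈ F. -/
/-- The scalar differential operator `L(u) = Σ_{n=0}^M a_n d^n u`. -/
noncomputable def scalOp {F : Type*} [Field F] (d : F → F) (M : ℕ) (a : ℕ → F) (u : F) : F :=
  ∑ n ∈ Finset.range (M + 1), a n * d^[n] u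

/-- The formal adjoint `L*(u) = Σ_{n=0}^M (−1)^n d^n (a_n u)`. -/
noncomputable def scalOpAdj {F : Type*} [Field F] (d : F → F) (M : ℕ) (a : ℕ → F) (u : F) : F :=
  ∑ n ∈ Finset.range (M + 1), (-1 : F) ^ n * d^[n] (a n * u)

/-!
Call `C L ≡ A` when `C L - A` is selfadjoint. If for every `A` there is `C` with `C K* ≡ A`, then
`P = C*` satisfies `K P - P* K* = A* - A`, and a skewadjoint `S` is `A* - A` for `A = -S / 2`.

Solvability of `C L ≡ A` for every `A` is proved by factoring `L ≠ 0`: if `f ≠ 0` is a solution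
of `L u = 0`, then `L = L' ∂ f⁻¹` with `L'` of smaller order. The factor `f⁻¹` is removed by
replacing `A` with `f A f`. To pass from `L'` to `L' ∂`, write `A = A₂ ∂ + a`. Solving
`L'* g = -A₂* 1` makes the constant term of `(A₂ + g L')*` vanish, so `A₂ + g L' = ∂ B`. Then
`C' L' ≡ B` yields `(∂ C' - g) L' ∂ ≡ A`, because the difference is `∂ (C' L' - B) ∂ - a`.
-/

open Polynomial Finset

/-- The ring `R × Rᵐᵒᵖ` with the exchange involution `(a, b)⋆ = (b, a)`. For `R` the ring of
additive endomorphisms of `F`, it carries an operator together with its formal adjoint, so that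
passing to the adjoint is a ring involution before one knows that an operator determines its
adjoint. -/
def ExchangeRing (R : Type*) := R × Rᵐᵒᵖ

namespace ExchangeRing

variable {R : Type*} [Ring R]

instance : Ring (ExchangeRing R) := inferInstanceAs (Ring (R × Rᵐᵒᵖ))

instance : StarRing (ExchangeRing R) where
  star A := (A.2.unop, .op A.1)
  star_involutive _ := rfl
  star_mul _ _ := rfl
  star_add _ _ := rfl

/-- The first projection: the operator underlying a pair. -/
def fst : ExchangeRing R →+* R := RingHom.fst R Rᵐᵒᵖ

theorem ext_fst {A B : ExchangeRing R} (h : fst A = fst B) (h_star : fst (star A) = fst (star B)) :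
    A = B :=
  Prod.ext h (MulOpposite.unop_injective h_star)

theorem mem_skewAdjoint_of_fst_star {A : ExchangeRing R} (h : fst (star A) = -fst A) :
    A ∈ skewAdjoint (ExchangeRing R) :=
  skewAdjoint.mem_iff.2 <| ext_fst h <| by
    rw [star_star, star_neg, map_neg, h, neg_neg]

end ExchangeRing

open ExchangeRing

section MulOp

variable {F : Type*} [Field F]

/-- Multiplication by an element of `F`, as an operator that is its own adjoint. -/
def mulOp : F →+* ExchangeRing (Module.End ℤ F) :=
  (Module.toModuleEnd ℤ F).prod
    ((Module.toModuleEnd ℤ F).toOpposite fun f g ↦ (Commute.all f g).map _)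

@[simp]
theorem fst_mulOp_apply (f u : F) : fst (mulOp f) u = f * u := rfl

@[simp]
theorem star_mulOp (f : F) : star (mulOp f) = mulOp f := rfl

theorem mulOp_mul_mulOp_inv {f : F} (hf : f ≠ 0) : mulOp f * mulOp f⁻¹ = 1 := by
  rw [← map_mul, mul_inv_cancel₀ hf, map_one]

theorem mulOp_inv_mul_mulOp {f : F} (hf : f ≠ 0) : mulOp f⁻¹ * mulOp f = 1 := by
  rw [← map_mul, inv_mul_cancel₀ hf, map_one]

end MulOp

namespace IsDerivation

variable {F : Type*} [Field F] {d : F → F} (hd : IsDerivation d)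

include hd in
theorem map_one_eq_zero : d 1 = 0 := by
  simpa using hd.leibniz 1 1

/-- The derivation `∂`, as an operator with adjoint `-∂`. -/
def derivOp : ExchangeRing (Module.End ℤ F) :=
  let D := (AddMonoidHom.mk' d hd.map_add).toIntLinearMap
  (D, .op (-D))

@[simp]
theorem fst_derivOp_apply (u : F) : fst hd.derivOp u = d u := rfl

@[simp]
theorem star_derivOp : star hd.derivOp = -hd.derivOp :=
  ext_fst rfl (neg_neg (fst hd.derivOp)).symm

theorem fst_derivOp_pow_apply (n : ℕ) (u : F) : fst (hd.derivOp ^ n) u = d^[n] u := by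
  rw [map_pow, Module.End.coe_pow]
  rfl

theorem derivOp_mul_mulOp (f : F) :
    hd.derivOp * mulOp f = mulOp f * hd.derivOp + mulOp (d f) := by
  refine ext_fst (LinearMap.ext fun u ↦ ?_) (LinearMap.ext fun u ↦ ?_)
  · change d (f * u) = f * d u + d f * u
    rw [hd.leibniz, add_comm]
  · change f * -d u = -d (f * u) + d f * u
    rw [hd.leibniz]
    ring

/-- The differential operator `Σ aₙ ∂ⁿ`, together with its formal adjoint, attached to the
polynomial `Σ aₙ Xⁿ`. This is additive, but multiplicative only on polynomials with constant
coefficients. -/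
noncomputable def ofPoly : F[X] →+ ExchangeRing (Module.End ℤ F) :=
  eval₂AddMonoidHom mulOp hd.derivOp

@[simp]
theorem ofPoly_monomial (n : ℕ) (a : F) :
    hd.ofPoly (monomial n a) = mulOp a * hd.derivOp ^ n :=
  eval₂_monomial _ _

@[simp]
theorem ofPoly_C (a : F) : hd.ofPoly (C a) = mulOp a :=
  eval₂_C _ _

@[simp]
theorem ofPoly_mul_X (p : F[X]) : hd.ofPoly (p * X) = hd.ofPoly p * hd.derivOp :=
  eval₂_mul_X _ _

theorem ofPoly_eq_divX (p : F[X]) :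
    hd.ofPoly p = hd.ofPoly p.divX * hd.derivOp + mulOp (p.coeff 0) := by
  conv_lhs => rw [← divX_mul_X_add p, AddMonoidHom.map_add, ofPoly_mul_X, ofPoly_C]

theorem fst_ofPoly_apply_one (p : F[X]) : fst (hd.ofPoly p) 1 = p.coeff 0 := by
  rw [ofPoly_eq_divX, RingHom.map_add, map_mul, LinearMap.add_apply, Module.End.mul_apply]
  simp [hd.map_one_eq_zero]

theorem star_ofPoly_monomial (n : ℕ) (a : F) :
    star (hd.ofPoly (monomial n a)) = mulOp ((-1) ^ n) * (hd.derivOp ^ n * mulOp a) := by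
  rw [ofPoly_monomial, star_mul, star_pow, star_derivOp, star_mulOp, neg_pow hd.derivOp,
    map_pow, map_neg, map_one, mul_assoc]

/-- The operator `u ↦ scalOp d M a u` with its formal adjoint `u ↦ scalOpAdj d M a u`. -/
noncomputable def scalarOp (M : ℕ) (a : ℕ → F) : ExchangeRing (Module.End ℤ F) :=
  hd.ofPoly (∑ n ∈ range (M + 1), monomial n (a n))

theorem ofPoly_eq_scalarOp (p : F[X]) : hd.ofPoly p = hd.scalarOp p.natDegree p.coeff := by
  rw [scalarOp, ← as_sum_range]

theorem fst_scalarOp_apply (M : ℕ) (a : ℕ → F) (u : F) :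
    fst (hd.scalarOp M a) u = scalOp d M a u := by
  simp [scalarOp, scalOp, ← fst_derivOp_pow_apply hd]

theorem fst_star_scalarOp_apply (M : ℕ) (a : ℕ → F) (u : F) :
    fst (star (hd.scalarOp M a)) u = scalOpAdj d M a u := by
  simp only [scalarOp, map_sum, star_sum, star_ofPoly_monomial, LinearMap.sum_apply, scalOpAdj]
  refine sum_congr rfl fun n _ ↦ ?_
  rw [← fst_derivOp_pow_apply hd, map_mul, map_mul, Module.End.mul_apply, Module.End.mul_apply,
    fst_mulOp_apply, fst_mulOp_apply]

theorem mulOp_mul_ofPoly (f : F) (p : F[X]) : mulOp f * hd.ofPoly p = hd.ofPoly (C f * p) := by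
  induction p using Polynomial.induction_on' with
  | add p q hp hq => rw [AddMonoidHom.map_add, mul_add, mul_add, AddMonoidHom.map_add, hp, hq]
  | monomial n a => simp [C_mul_monomial, mul_assoc]

theorem derivOp_mul_ofPoly_mem_range (p : F[X]) : hd.derivOp * hd.ofPoly p ∈ hd.ofPoly.range := by
  induction p using Polynomial.induction_on' with
  | add p q hp hq =>
    rw [AddMonoidHom.map_add, mul_add]
    exact add_mem hp hq
  | monomial n a =>
    refine ⟨monomial (n + 1) a + monomial n (d a), ?_⟩
    rw [AddMonoidHom.map_add, ofPoly_monomial, ofPoly_monomial, ofPoly_monomial, ← mul_assoc,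
      derivOp_mul_mulOp, add_mul, mul_assoc _ hd.derivOp, pow_succ']

theorem ofPoly_mul_ofPoly_mem_range (p q : F[X]) :
    hd.ofPoly p * hd.ofPoly q ∈ hd.ofPoly.range := by
  induction p using Polynomial.induction_on' with
  | add p₁ p₂ h₁ h₂ =>
    rw [AddMonoidHom.map_add, add_mul]
    exact add_mem h₁ h₂
  | monomial n a =>
    rw [ofPoly_monomial]
    induction n generalizing q with
    | zero => exact ⟨C a * q, by rw [pow_zero, mul_one, mulOp_mul_ofPoly]⟩
    | succ n ih =>
      obtain ⟨r, hr⟩ := hd.derivOp_mul_ofPoly_mem_range q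
      rw [pow_succ, ← mul_assoc, mul_assoc, ← hr]
      exact ih r

/-- The ring `F[∂]` of scalar differential operators, each with its formal adjoint. -/
noncomputable def diffOps : Subring (ExchangeRing (Module.End ℤ F)) where
  __ := hd.ofPoly.range
  one_mem' := ⟨C 1, by rw [ofPoly_C, map_one]⟩
  mul_mem' := by
    rintro _ _ ⟨p, rfl⟩ ⟨q, rfl⟩
    exact hd.ofPoly_mul_ofPoly_mem_range p q

theorem ofPoly_mem_diffOps (p : F[X]) : hd.ofPoly p ∈ hd.diffOps := ⟨p, rfl⟩

theorem scalarOp_mem_diffOps (M : ℕ) (a : ℕ → F) : hd.scalarOp M a ∈ hd.diffOps :=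
  hd.ofPoly_mem_diffOps _

theorem mulOp_mem_diffOps (f : F) : mulOp f ∈ hd.diffOps := ⟨C f, hd.ofPoly_C f⟩

theorem derivOp_mem_diffOps : hd.derivOp ∈ hd.diffOps :=
  ⟨monomial 1 1, by rw [ofPoly_monomial, map_one, one_mul, pow_one]⟩

variable {hd} {A : ExchangeRing (Module.End ℤ F)}

theorem star_mem_diffOps (hA : A ∈ hd.diffOps) : star A ∈ hd.diffOps := by
  obtain ⟨p, rfl⟩ := hA
  induction p using Polynomial.induction_on' with
  | add p q hp hq =>
    rw [AddMonoidHom.map_add, star_add]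
    exact add_mem hp hq
  | monomial n a =>
    rw [star_ofPoly_monomial]
    exact mul_mem (hd.mulOp_mem_diffOps _)
      (mul_mem (pow_mem hd.derivOp_mem_diffOps n) (hd.mulOp_mem_diffOps a))

theorem exists_eq_mul_derivOp_add (hA : A ∈ hd.diffOps) :
    ∃ B ∈ hd.diffOps, A = B * hd.derivOp + mulOp (fst A 1) := by
  obtain ⟨p, rfl⟩ := hA
  exact ⟨_, hd.ofPoly_mem_diffOps p.divX, by rw [fst_ofPoly_apply_one, ← ofPoly_eq_divX]⟩

theorem exists_eq_derivOp_mul (hA : A ∈ hd.diffOps) (h : fst (star A) 1 = 0) :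
    ∃ B ∈ hd.diffOps, A = hd.derivOp * B := by
  obtain ⟨B, hB, hAB⟩ := exists_eq_mul_derivOp_add (star_mem_diffOps hA)
  refine ⟨-star B, neg_mem (star_mem_diffOps hB), ?_⟩
  rw [← star_star A, hAB, h, map_zero, add_zero, star_mul, star_derivOp, neg_mul, mul_neg]

theorem exists_scalOp_eq_of_mem_diffOps (hA : A ∈ hd.diffOps) :
    ∃ (M : ℕ) (a : ℕ → F), ∀ u, fst A u = scalOp d M a u ∧ fst (star A) u = scalOpAdj d M a u := by
  obtain ⟨p, rfl⟩ := hA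
  rw [ofPoly_eq_scalarOp]
  exact ⟨_, _, fun u ↦ ⟨hd.fst_scalarOp_apply _ _ u, hd.fst_star_scalarOp_apply _ _ u⟩⟩

variable (hd)

theorem exists_ofPoly_eq_ofPoly_mul_mulOp {n : ℕ} {p : F[X]} (hp : p.natDegree ≤ n) (f : F) :
    ∃ q : F[X], q.natDegree ≤ n ∧ hd.ofPoly q = hd.ofPoly p * mulOp f := by
  induction n generalizing p f with
  | zero =>
    rw [eq_C_of_natDegree_le_zero hp]
    exact ⟨C (p.coeff 0 * f), (natDegree_C _).le, by rw [ofPoly_C, ofPoly_C, map_mul]⟩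
  | succ n ih =>
    have hp_divX : p.divX.natDegree ≤ n := by
      rw [natDegree_divX_eq_natDegree_tsub_one]
      omega
    obtain ⟨q, hq, hqf⟩ := ih hp_divX f
    obtain ⟨r, hr, hrf⟩ := ih hp_divX (d f)
    refine ⟨q * X + r + C (p.coeff 0 * f), ?_, ?_⟩
    · compute_degree
      omega
    · rw [hd.ofPoly_eq_divX p, AddMonoidHom.map_add, AddMonoidHom.map_add, ofPoly_mul_X,
        ofPoly_C, hqf, hrf, add_mul, mul_assoc _ hd.derivOp, derivOp_mul_mulOp, map_mul]
      noncomm_ring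

end IsDerivation

namespace LinearlyClosed

variable {F : Type*} [Field F] {d : F → F} {hd : IsDerivation d}
  {L : ExchangeRing (Module.End ℤ F)}

theorem surjective_fst_ofPoly (hlc : LinearlyClosed d) {p : F[X]} (hp : p ≠ 0) :
    Function.Surjective ⇑(fst (hd.ofPoly p)) := by
  intro b
  obtain ⟨u, hu⟩ := (hlc p.natDegree p.coeff (leadingCoeff_ne_zero.2 hp)).1 b
  refine ⟨u, ?_⟩
  rw [hd.ofPoly_eq_scalarOp, hd.fst_scalarOp_apply]
  exact hu

theorem exists_ne_zero_fst_ofPoly_apply_eq_zero (hlc : LinearlyClosed d) {p : F[X]}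
    (hp : p.natDegree ≠ 0) : ∃ f ≠ 0, fst (hd.ofPoly p) f = 0 := by
  have hp_lead : p.leadingCoeff ≠ 0 := leadingCoeff_ne_zero.2 (by rintro rfl; simp at hp)
  obtain ⟨f, hf, hpf⟩ := (hlc p.natDegree p.coeff hp_lead).2 (Nat.one_le_iff_ne_zero.2 hp)
  refine ⟨f, hf, ?_⟩
  rw [hd.ofPoly_eq_scalarOp, hd.fst_scalarOp_apply]
  exact hpf

theorem ofPoly_ne_zero (hlc : LinearlyClosed d) {p : F[X]} (hp : p ≠ 0) : hd.ofPoly p ≠ 0 := by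
  intro h
  obtain ⟨u, hu⟩ := hlc.surjective_fst_ofPoly (hd := hd) hp 1
  simp [h] at hu

theorem scalarOp_ne_zero (hlc : LinearlyClosed d) {N : ℕ} {k : ℕ → F}
    (hk : ∃ n ≤ N, k n ≠ 0) : hd.scalarOp N k ≠ 0 := by
  obtain ⟨n, hn, hkn⟩ := hk
  refine hlc.ofPoly_ne_zero fun h ↦ hkn ?_
  simpa [coeff_monomial, hn] using congrArg (coeff · n) h

theorem surjective_fst (hlc : LinearlyClosed d) (hL : L ∈ hd.diffOps) (hL0 : L ≠ 0) :
    Function.Surjective ⇑(fst L) := by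
  obtain ⟨p, rfl⟩ := hL
  exact hlc.surjective_fst_ofPoly (by rintro rfl; exact hL0 (map_zero _))

theorem exists_ofPoly_eq_mul_derivOp_mul_mulOp (hlc : LinearlyClosed d) {n : ℕ} {p : F[X]}
    (hp : p.natDegree = n + 1) :
    ∃ q : F[X], q.natDegree ≤ n ∧ ∃ f ≠ 0, hd.ofPoly p = hd.ofPoly q * hd.derivOp * mulOp f := by
  obtain ⟨f, hf, hpf⟩ :=
    hlc.exists_ne_zero_fst_ofPoly_apply_eq_zero (hd := hd) (p := p) (by omega)
  obtain ⟨q, hq, hqf⟩ := hd.exists_ofPoly_eq_ofPoly_mul_mulOp hp.le f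
  have hq_coeff : q.coeff 0 = 0 := by
    rw [← hd.fst_ofPoly_apply_one, hqf, map_mul, Module.End.mul_apply, fst_mulOp_apply,
      mul_one, hpf]
  refine ⟨q.divX, ?_, f⁻¹, inv_ne_zero hf, ?_⟩
  · rw [natDegree_divX_eq_natDegree_tsub_one]
    omega
  · calc hd.ofPoly p = hd.ofPoly q * mulOp f⁻¹ := by
          rw [hqf, mul_assoc, mulOp_mul_mulOp_inv hf, mul_one]
      _ = hd.ofPoly q.divX * hd.derivOp * mulOp f⁻¹ := by
          rw [hd.ofPoly_eq_divX q, hq_coeff, map_zero, add_zero]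

theorem diffOps_induction (hlc : LinearlyClosed d)
    {motive : ExchangeRing (Module.End ℤ F) → Prop}
    (of_mulOp : ∀ f ≠ 0, motive (mulOp f))
    (mul_derivOp : ∀ L ∈ hd.diffOps, L ≠ 0 → motive L → motive (L * hd.derivOp))
    (mul_mulOp : ∀ L, motive L → ∀ f ≠ 0, motive (L * mulOp f))
    (hL : L ∈ hd.diffOps) (hL0 : L ≠ 0) : motive L := by
  obtain ⟨p, rfl⟩ := hL
  induction hn : p.natDegree using Nat.strong_induction_on generalizing p with
  | _ n ih =>
    cases n with
    | zero =>
      rw [eq_C_of_natDegree_eq_zero hn, hd.ofPoly_C] at hL0 ⊢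
      exact of_mulOp _ fun h ↦ hL0 (by rw [h, map_zero])
    | succ n =>
      obtain ⟨q, hq, f, hf, hpq⟩ :=
        hlc.exists_ofPoly_eq_mul_derivOp_mul_mulOp (hd := hd) hn
      have hq0 : hd.ofPoly q ≠ 0 := fun h ↦ hL0 (by rw [hpq, h, zero_mul, zero_mul])
      rw [hpq]
      exact mul_mulOp _ (mul_derivOp _ (hd.ofPoly_mem_diffOps q) hq0
        (ih _ (Nat.lt_succ_of_le hq) q hq0 rfl)) f hf

end LinearlyClosed

namespace IsDerivation

variable {F : Type*} [Field F] {d : F → F} (hd : IsDerivation d)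
  {K L S : ExchangeRing (Module.End ℤ F)}

/-- `L` right divides every differential operator up to selfadjoint ones. -/
def RightDividesModSelfAdjoint (L : ExchangeRing (Module.End ℤ F)) : Prop :=
  ∀ A ∈ hd.diffOps, ∃ C ∈ hd.diffOps, IsSelfAdjoint (C * L - A)

variable {hd}

theorem rightDividesModSelfAdjoint_mulOp {f : F} (hf : f ≠ 0) :
    hd.RightDividesModSelfAdjoint (mulOp f) := fun A hA ↦ by
  refine ⟨A * mulOp f⁻¹, mul_mem hA (hd.mulOp_mem_diffOps _), ?_⟩
  rw [mul_assoc, mulOp_inv_mul_mulOp hf, mul_one, sub_self]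
  exact .zero _

theorem RightDividesModSelfAdjoint.mul_mulOp (hL : hd.RightDividesModSelfAdjoint L) {f : F}
    (hf : f ≠ 0) : hd.RightDividesModSelfAdjoint (L * mulOp f) := fun A hA ↦ by
  have hf_inv_mem := hd.mulOp_mem_diffOps f⁻¹
  obtain ⟨C, hC, hCL⟩ := hL (mulOp f⁻¹ * A * mulOp f⁻¹) (mul_mem (mul_mem hf_inv_mem hA) hf_inv_mem)
  refine ⟨mulOp f * C, mul_mem (hd.mulOp_mem_diffOps f) hC, ?_⟩
  have hconj : mulOp f * (C * L - mulOp f⁻¹ * A * mulOp f⁻¹) * mulOp f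
      = mulOp f * C * (L * mulOp f) - A :=
    calc _ = mulOp f * C * (L * mulOp f)
          - mulOp f * mulOp f⁻¹ * A * (mulOp f⁻¹ * mulOp f) := by noncomm_ring
      _ = _ := by rw [mulOp_mul_mulOp_inv hf, mulOp_inv_mul_mulOp hf, one_mul, mul_one]
  exact hconj ▸ hCL.conjugate_self (star_mulOp f)

theorem isSelfAdjoint_derivOp_mul_mul_derivOp {T : ExchangeRing (Module.End ℤ F)}
    (hT : IsSelfAdjoint T) : IsSelfAdjoint (hd.derivOp * T * hd.derivOp) := by
  simpa using (hT.conjugate hd.derivOp).neg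

theorem RightDividesModSelfAdjoint.mul_derivOp (hL : hd.RightDividesModSelfAdjoint L)
    (hL_mem : L ∈ hd.diffOps) (hL_surj : Function.Surjective ⇑(fst (star L))) :
    hd.RightDividesModSelfAdjoint (L * hd.derivOp) := fun A hA ↦ by
  obtain ⟨A₂, hA₂, hA_eq⟩ := exists_eq_mul_derivOp_add hA
  obtain ⟨g, hg⟩ := hL_surj (-fst (star A₂) 1)
  have hgL_mem : A₂ + mulOp g * L ∈ hd.diffOps :=
    add_mem hA₂ (mul_mem (hd.mulOp_mem_diffOps g) hL_mem)
  have hgL_star : fst (star (A₂ + mulOp g * L)) 1 = 0 := by simp [hg]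
  obtain ⟨B, hB, hB_eq⟩ := exists_eq_derivOp_mul hgL_mem hgL_star
  obtain ⟨C, hC, hCL⟩ := hL B hB
  refine ⟨hd.derivOp * C - mulOp g,
    sub_mem (mul_mem hd.derivOp_mem_diffOps hC) (hd.mulOp_mem_diffOps g), ?_⟩
  have hdiff : (hd.derivOp * C - mulOp g) * (L * hd.derivOp) - A
      = hd.derivOp * (C * L - B) * hd.derivOp - mulOp (fst A 1) :=
    calc _ = (hd.derivOp * C - mulOp g) * (L * hd.derivOp)
          - (A₂ * hd.derivOp + mulOp (fst A 1)) := by rw [← hA_eq]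
      _ = hd.derivOp * C * L * hd.derivOp - (A₂ + mulOp g * L) * hd.derivOp
          - mulOp (fst A 1) := by noncomm_ring
      _ = _ := by rw [hB_eq]; noncomm_ring
  exact hdiff ▸ (isSelfAdjoint_derivOp_mul_mul_derivOp hCL).sub (star_mulOp _)

theorem rightDividesModSelfAdjoint_of_ne_zero (hlc : LinearlyClosed d) (hL : L ∈ hd.diffOps)
    (hL0 : L ≠ 0) : hd.RightDividesModSelfAdjoint L :=
  hlc.diffOps_induction (fun _ hf ↦ rightDividesModSelfAdjoint_mulOp hf)
    (fun _ hL hL0 ih ↦ ih.mul_derivOp hL <|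
      hlc.surjective_fst (star_mem_diffOps hL) (star_ne_zero.2 hL0))
    (fun _ ih _ hf ↦ ih.mul_mulOp hf) hL hL0

theorem exists_mul_sub_star_mul_star_eq_sub_star (hlc : LinearlyClosed d) (hK : K ∈ hd.diffOps)
    (hK0 : K ≠ 0) {A : ExchangeRing (Module.End ℤ F)} (hA : A ∈ hd.diffOps) :
    ∃ P ∈ hd.diffOps, K * P - star P * star K = A - star A := by
  obtain ⟨C, hC, hCK⟩ := rightDividesModSelfAdjoint_of_ne_zero hlc (star_mem_diffOps hK)
    (star_ne_zero.2 hK0) (star A) (star_mem_diffOps hA)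
  refine ⟨star C, star_mem_diffOps hC, ?_⟩
  have hCK_star : K * star C - A = C * star K - star A := by simpa using hCK.star_eq
  rw [star_star, sub_eq_sub_iff_sub_eq_sub, hCK_star]

theorem exists_sub_star_eq_of_mem_skewAdjoint [NeZero (2 : F)] (hS : S ∈ hd.diffOps)
    (hS_skew : S ∈ skewAdjoint (ExchangeRing (Module.End ℤ F))) :
    ∃ A ∈ hd.diffOps, A - star A = S := by
  refine ⟨mulOp 2⁻¹ * S, mul_mem (hd.mulOp_mem_diffOps _) hS, ?_⟩
  have hhalf : mulOp (2⁻¹ : F) * 2 = 1 := by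
    rw [← map_ofNat mulOp 2, mulOp_inv_mul_mulOp two_ne_zero]
  have htwo : 2 * mulOp (2⁻¹ : F) = 1 := by
    rw [← map_ofNat mulOp 2, mulOp_mul_mulOp_inv two_ne_zero]
  let _ : Invertible (2 : ExchangeRing (Module.End ℤ F)) := ⟨mulOp 2⁻¹, hhalf, htwo⟩
  have hcomm : Commute S (mulOp 2⁻¹) := (Commute.ofNat_right S 2).invOf_right
  rw [star_mul, star_mulOp, skewAdjoint.mem_iff.1 hS_skew, neg_mul, sub_neg_eq_add, hcomm.eq,
    ← two_mul, ← mul_assoc, htwo, one_mul]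

end IsDerivation

open IsDerivation in
theorem stmt_6_general (F : Type*) [Field F] [NeZero (2 : F)] (d : F → F) (hd : IsDerivation d)
    (hlc : LinearlyClosed d)
    (N : ℕ) (k : ℕ → F) (hk : ∃ n ≤ N, k n ≠ 0)
    (MS : ℕ) (s : ℕ → F)
    (hskew : ∀ u : F, scalOpAdj d MS s u = - scalOp d MS s u) :
    ∃ (MP : ℕ) (p : ℕ → F), ∀ u : F,
      scalOp d N k (scalOp d MP p u) - scalOpAdj d MP p (scalOpAdj d N k u)
        = scalOp d MS s u := by
  have hS_skew : hd.scalarOp MS s ∈ skewAdjoint (ExchangeRing (Module.End ℤ F)) :=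
    mem_skewAdjoint_of_fst_star <| LinearMap.ext fun u ↦ by
      rw [fst_star_scalarOp_apply, hskew, LinearMap.neg_apply, fst_scalarOp_apply]
  obtain ⟨A, hA, hAS⟩ :=
    exists_sub_star_eq_of_mem_skewAdjoint (hd.scalarOp_mem_diffOps _ _) hS_skew
  obtain ⟨P, hP, hKP⟩ := exists_mul_sub_star_mul_star_eq_sub_star hlc
    (hd.scalarOp_mem_diffOps _ _) (hlc.scalarOp_ne_zero hk) hA
  obtain ⟨MP, p, hp⟩ := exists_scalOp_eq_of_mem_diffOps hP
  refine ⟨MP, p, fun u ↦ ?_⟩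
  have hKP_apply := LinearMap.congr_fun (congrArg fst (hKP.trans hAS)) u
  simpa only [map_sub, map_mul, LinearMap.sub_apply, Module.End.mul_apply, fst_scalarOp_apply,
    fst_star_scalarOp_apply, (hp _).1, (hp _).2] using hKP_apply

/-- Let `F` be a linearly closed differential field of characteristic zero and let
`K(u) = Σ_{n=0}^N k_n d^n u` be a nonzero scalar differential operator.  Then for every
skewadjoint scalar differential operator `S` (`S* = −S`) there exists a scalar
differential operator `P` such that `K(P(u)) − P*(K*(u)) = S(u)` for all `u ∈ F`. -/
theorem stmt_6 (F : Type*) [Field F] [CharZero F] (d : F → F) (hd : IsDerivation d)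
    (hlc : LinearlyClosed d)
    (N : ℕ) (k : ℕ → F) (hk : ∃ n ≤ N, k n ≠ 0)
    (MS : ℕ) (s : ℕ → F)
    (hskew : ∀ u : F, scalOpAdj d MS s u = - scalOp d MS s u) :
    ∃ (MP : ℕ) (p : ℕ → F), ∀ u : F,
      scalOp d N k (scalOp d MP p u) - scalOpAdj d MP p (scalOpAdj d N k u)
        = scalOp d MS s u :=
  stmt_6_general F d hd hlc N k hk MS s hskew
end

section
/- Let k ≥ 1 and let F be a differential field of characteristic zero such that the derivation ∂ : F → F is surjective. Then every totally skewsymmetric k-differential operator S on F^ℓ admits a decomposition S_{i_0,…,i_k} = Σ Λ₀^{m_0}(λ_1^{m_1}⋯λ_k^{m_k} · s^{m_0,…,m_k}_{i_0,…,i_k}) for some M ∈ ℤ≥0, where the sum ranges over tuples (m_0,…,m_k) ∈ {0,…,M}^{k+1} whose non-increasing rearrangement (μ_0,…,μ_k) satisfies μ_0 − μ_1 = 1, and where the coefficients s^{m_0,…,m_k}_{i_0,…,i_k} ∈ F are skewsymmetric with respect to simultaneous permutations of upper and lower indices: s^{m_{σ(0)},…,m_{σ(k)}}_{i_{σ(0)},…,i_{σ(k)}}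 = sign(σ) · s^{m_0,…,m_k}_{i_0,…,i_k} for all σ ∈ S_{k+1}. -/
/-- The derivation `∂̂` of `F[λ_1,…,λ_k]` acting as `d` on coefficients and annihilating
the variables. -/
noncomputable def coeffDer {F : Type*} [Field F] (d : F → F) {k : ℕ}
    (Q : MvPolynomial (Fin k) F) : MvPolynomial (Fin k) F :=
  ∑ m ∈ Q.support, (MvPolynomial.monomial m) (d (MvPolynomial.coeff m Q))

/-- `Λ₀(Q) = −(λ_1+⋯+λ_k)·Q − ∂̂(Q)`. -/
noncomputable def lamZero {F : Type*} [Field F] (d : F → F) {k : ℕ} :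
    MvPolynomial (Fin k) F → MvPolynomial (Fin k) F :=
  fun Q => -((∑ a : Fin k, MvPolynomial.X a) * Q) - coeffDer d Q

/-- `E(Q) = (λ_1+⋯+λ_k)·Q + ∂̂(Q)`. -/
noncomputable def eOp {F : Type*} [Field F] (d : F → F) {k : ℕ} :
    MvPolynomial (Fin k) F → MvPolynomial (Fin k) F :=
  fun Q => (∑ a : Fin k, MvPolynomial.X a) * Q + coeffDer d Q

/-- A `k`-differential operator on `F^ℓ` is skewsymmetric if the simultaneous action of
`S_k` on the indices `i_1,…,i_k` and the variables `λ_1,…,λ_k` is by the sign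
character. -/
def IsSkewsym {F : Type*} [Field F] {k l : ℕ}
    (P : (Fin (k + 1) → Fin l) → MvPolynomial (Fin k) F) : Prop :=
  ∀ (σ : Equiv.Perm (Fin k)) (i : Fin (k + 1) → Fin l),
    MvPolynomial.rename σ (P (Fin.cons (i 0) (fun a => i (Fin.succ (σ a)))))
      = (Equiv.Perm.sign σ : ℤ) • P i

/-- The operation `P ↦ P^{τ_α}`: expand `P_{i_α,i_1,…,i_0,…,i_k} = Σ_n p_n λ^n` and
replace the power `λ_α^{n_α}` by an application of `Λ₀^{n_α}`. -/
noncomputable def tauAct {F : Type*} [Field F] (d : F → F) {k l : ℕ} (α : Fin k)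
    (P : (Fin (k + 1) → Fin l) → MvPolynomial (Fin k) F)
    (i : Fin (k + 1) → Fin l) : MvPolynomial (Fin k) F :=
  ∑ m ∈ (P (fun j => i (Equiv.swap 0 α.succ j))).support,
    (lamZero d)^[m α]
      ((MvPolynomial.monomial (Finsupp.erase α m))
        (MvPolynomial.coeff m (P (fun j => i (Equiv.swap 0 α.succ j)))))

/-- A tuple `(m_0,…,m_k)` of natural numbers whose non-increasing rearrangement
`(μ_0,…,μ_k)` satisfies `μ_0 − μ_1 = 1`. -/
def gapOne (k : ℕ) (m : Fin (k + 1) → ℕ) : Prop :=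
  ∃ σ : Equiv.Perm (Fin (k + 1)), Antitone (fun j => m (σ j)) ∧ m (σ 0) = m (σ 1) + 1

/-!
A family `S` is lifted to polynomials in `λ₀, …, λₖ` modulo the image of `λ₀ + ⋯ + λₖ + ∂̂`: this
image is exactly the kernel of the substitution `λ₀ = Λ₀`. As it is stable under permutations of the
variables, `Sₖ₊₁` acts on the quotient, and total skewsymmetry says that `S` is equivariant up to
sign. Since `∂` is surjective, every class contains a polynomial whose exponents all have gap one.
Antisymmetrizing such a lift of `S` and dividing by `(k + 1)!` gives the coefficients.
-/

namespace PolydifferentialOperator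

open MvPolynomial Equiv Equiv.Perm

section CoeffLift

variable {σ R A : Type*} [CommSemiring R] [AddCommMonoid A]

/-- The additive map on polynomials that sends the monomial `c X^m` to `h m c`. The maps below are
additive but not linear over the coefficients, so `MvPolynomial.basisMonomials` does not apply. -/
noncomputable def coeffLift (h : (σ →₀ ℕ) → R →+ A) : MvPolynomial σ R →+ A :=
  (Finsupp.liftAddHom h).comp AddMonoidAlgebra.coeffAddEquiv.toAddMonoidHom

lemma coeffLift_apply (h : (σ →₀ ℕ) → R →+ A) (Q : MvPolynomial σ R) :
    coeffLift h Q = ∑ m ∈ Q.support, h m (coeff m Q) :=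
  sum_def (b := fun m c => h m c)

lemma coeffLift_monomial (h : (σ →₀ ℕ) → R →+ A) (m : σ →₀ ℕ) (c : R) :
    coeffLift h (monomial m c) = h m c :=
  Finsupp.liftAddHom_apply_single h m c

/-- The additive map `∂̂` applying `d` to every coefficient. -/
noncomputable def mapCoeff (d : R →+ R) : MvPolynomial σ R →+ MvPolynomial σ R :=
  coeffLift fun m => (monomial m).toAddMonoidHom.comp d

lemma mapCoeff_monomial (d : R →+ R) (m : σ →₀ ℕ) (c : R) :
    mapCoeff d (monomial m c) = monomial m (d c) :=
  coeffLift_monomial _ m c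

lemma mapCoeff_rename {τ : Type*} (d : R →+ R) (f : σ → τ) (Q : MvPolynomial σ R) :
    mapCoeff d (rename f Q) = rename f (mapCoeff d Q) := by
  induction Q using MvPolynomial.induction_on' with
  | monomial m c => simp only [rename_monomial, mapCoeff_monomial]
  | add P Q hP hQ => simp only [map_add, hP, hQ]

lemma X_mul_monomial (a : σ) (m : σ →₀ ℕ) (c : R) :
    X a * monomial m c = monomial (m + Finsupp.single a 1) c := by
  rw [X, monomial_mul, one_mul, add_comm]

lemma mapCoeff_X_mul (d : R →+ R) (a : σ) (Q : MvPolynomial σ R) :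
    mapCoeff d (X a * Q) = X a * mapCoeff d Q := by
  induction Q using MvPolynomial.induction_on' with
  | monomial m c => simp only [X_mul_monomial, mapCoeff_monomial]
  | add P Q hP hQ => simp only [mul_add, map_add, hP, hQ]

lemma eq_sum_monomial_of_degreeOf_le [Fintype σ] [DecidableEq σ]
    {Q : MvPolynomial σ R} {M : ℕ}
    (hQ : ∀ a, Q.degreeOf a ≤ M) :
    Q = ∑ m : σ → Fin (M + 1),
      monomial (Finsupp.equivFunOnFinite.symm fun a => (m a : ℕ))
        (coeff (Finsupp.equivFunOnFinite.symm fun a => (m a : ℕ)) Q) := by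
  ext n
  simp only [coeff_sum, coeff_monomial]
  by_cases hn : n ∈ Q.support
  · have hlt : ∀ a, n a < M + 1 := fun a =>
      Nat.lt_succ_of_le ((monomial_le_degreeOf a hn).trans (hQ a))
    have hexp : Finsupp.equivFunOnFinite.symm (fun a => (⟨n a, hlt a⟩ : Fin (M + 1)).val) = n := by
      ext
      rfl
    rw [Finset.sum_eq_single fun a => ⟨n a, hlt a⟩, if_pos hexp, hexp]
    · intro m _ hm
      refine if_neg fun h => hm ?_
      ext a
      exact DFunLike.congr_fun h a
    · exact fun h => absurd (Finset.mem_univ _) h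
  · rw [notMem_support_iff.mp hn, Finset.sum_eq_zero]
    intro m _
    split_ifs with h
    · rw [h, notMem_support_iff.mp hn]
    · rfl

end CoeffLift

section LambdaDer

variable {ι R : Type*} [Fintype ι] [CommRing R] (d : R →+ R)

/-- The operator `Q ↦ (∑ₐ λₐ) Q + ∂̂ Q`. -/
noncomputable def lambdaDer : MvPolynomial ι R →+ MvPolynomial ι R :=
  AddMonoidHom.mulLeft (∑ a, X a) + mapCoeff d

lemma lambdaDer_apply (Q : MvPolynomial ι R) :
    lambdaDer d Q = (∑ a, X a) * Q + mapCoeff d Q :=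
  rfl

lemma lambdaDer_monomial (m : ι →₀ ℕ) (c : R) :
    lambdaDer d (monomial m c) =
      ∑ a, monomial (m + Finsupp.single a 1) c + monomial m (d c) := by
  simp only [lambdaDer_apply, mapCoeff_monomial, Finset.sum_mul, X_mul_monomial]

lemma lambdaDer_X_mul (a : ι) (Q : MvPolynomial ι R) :
    lambdaDer d (X a * Q) = X a * lambdaDer d Q := by
  rw [lambdaDer_apply, lambdaDer_apply, mapCoeff_X_mul]
  ring

lemma lambdaDer_rename {κ : Type*} [Fintype κ] (e : ι ≃ κ) (Q : MvPolynomial ι R) :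
    lambdaDer d (rename e Q) = rename e (lambdaDer d Q) := by
  simp only [lambdaDer_apply, mapCoeff_rename, map_add, map_mul, map_sum, rename_X,
    Equiv.sum_comp e (X : κ → MvPolynomial κ R)]

lemma lambdaDer_rename_succ {n : ℕ} (Q : MvPolynomial (Fin n) R) :
    lambdaDer d (rename Fin.succ Q) =
      X 0 * rename Fin.succ Q + rename Fin.succ (lambdaDer d Q) := by
  simp only [lambdaDer_apply, mapCoeff_rename, map_add, map_mul, map_sum, rename_X,
    Fin.sum_univ_succ]
  ring

/-- The operator `Λ₀ = -(∑ₐ λₐ) - ∂̂`. -/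
noncomputable def lambdaZero : AddMonoid.End (MvPolynomial ι R) :=
  -lambdaDer d

lemma lambdaZero_apply (Q : MvPolynomial ι R) : lambdaZero d Q = -lambdaDer d Q :=
  rfl

end LambdaDer

section ElimZero

variable {R : Type*} [CommRing R] {n : ℕ}

lemma mapDomain_succ (m : Fin n →₀ ℕ) : m.mapDomain Fin.succ = m.cons 0 := by
  ext j
  refine Fin.cases ?_ (fun a => ?_) j
  · rw [Finsupp.cons_zero, Finsupp.mapDomain_of_notMem_range]
    exact fun ⟨a, ha⟩ => Fin.succ_ne_zero a ha
  · rw [Finsupp.cons_succ, Finsupp.mapDomain_apply (Fin.succ_injective n)]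

lemma X_zero_pow_mul_rename_succ (j : ℕ) (m : Fin n →₀ ℕ) (c : R) :
    X 0 ^ j * rename Fin.succ (monomial m c) = monomial (m.cons j) c := by
  have hexp : Finsupp.single 0 j + m.cons 0 = m.cons j := by
    ext a
    refine Fin.cases ?_ (fun b => ?_) a <;> simp
  rw [rename_monomial, mapDomain_succ, X_pow_eq_monomial, monomial_mul, one_mul, hexp]

lemma induction_on_X_zero_mul {motive : MvPolynomial (Fin (n + 1)) R → Prop}
    (Q : MvPolynomial (Fin (n + 1)) R)
    (rename_succ : ∀ Q : MvPolynomial (Fin n) R, motive (rename Fin.succ Q))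
    (X_zero_mul : ∀ Q, motive Q → motive (X 0 * Q))
    (add : ∀ P Q, motive P → motive Q → motive (P + Q)) : motive Q := by
  induction Q using MvPolynomial.induction_on' with
  | monomial m c =>
    rw [← Finsupp.cons_tail m, ← X_zero_pow_mul_rename_succ]
    induction m 0 with
    | zero => simpa only [pow_zero, one_mul] using rename_succ _
    | succ j ih => simpa only [pow_succ', mul_assoc] using X_zero_mul _ ih
  | add P Q hP hQ => exact add P Q hP hQ

variable (d : R →+ R)

/-- The map `R[λ₀,…,λₙ] → R[λ₁,…,λₙ]` replacing `λ₀ʲ Q` by `Λ₀ʲ Q`, for `Q` free of `λ₀`. -/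
noncomputable def elimZero : MvPolynomial (Fin (n + 1)) R →+ MvPolynomial (Fin n) R :=
  coeffLift fun m => AddMonoidHom.comp (lambdaZero d ^ m 0) (monomial m.tail).toAddMonoidHom

lemma elimZero_monomial (m : Fin (n + 1) →₀ ℕ) (c : R) :
    elimZero d (monomial m c) = (lambdaZero d ^ m 0) (monomial m.tail c) :=
  coeffLift_monomial _ m c

lemma elimZero_rename_succ (Q : MvPolynomial (Fin n) R) :
    elimZero d (rename Fin.succ Q) = Q := by
  induction Q using MvPolynomial.induction_on' with
  | monomial m c =>
    rw [rename_monomial, mapDomain_succ, elimZero_monomial, Finsupp.cons_zero, Finsupp.tail_cons,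
      pow_zero, AddMonoid.End.one_apply]
  | add P Q hP hQ => rw [map_add, map_add, hP, hQ]

lemma elimZero_X_zero_mul (Q : MvPolynomial (Fin (n + 1)) R) :
    elimZero d (X 0 * Q) = lambdaZero d (elimZero d Q) := by
  induction Q using MvPolynomial.induction_on' with
  | monomial m c =>
    have htail : (m + Finsupp.single 0 1).tail = m.tail := by
      ext a
      simp [Finsupp.tail_apply]
    rw [X_mul_monomial, elimZero_monomial, elimZero_monomial, htail, Finsupp.add_apply,
      Finsupp.single_eq_same, pow_succ']
    rfl
  | add P Q hP hQ => rw [mul_add, map_add, map_add, map_add, hP, hQ]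

lemma elimZero_lambdaDer (Q : MvPolynomial (Fin (n + 1)) R) :
    elimZero d (lambdaDer d Q) = 0 := by
  induction Q using induction_on_X_zero_mul with
  | rename_succ Q =>
    rw [lambdaDer_rename_succ, map_add, elimZero_X_zero_mul, elimZero_rename_succ,
      elimZero_rename_succ, lambdaZero_apply, neg_add_cancel]
  | X_zero_mul Q ih => rw [lambdaDer_X_mul, elimZero_X_zero_mul, ih, map_zero]
  | add P Q hP hQ => rw [map_add, map_add, hP, hQ, add_zero]

lemma sub_rename_succ_elimZero_mem_range (Q : MvPolynomial (Fin (n + 1)) R) :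
    Q - rename Fin.succ (elimZero d Q) ∈ (lambdaDer d).range := by
  induction Q using induction_on_X_zero_mul with
  | rename_succ Q => rw [elimZero_rename_succ, sub_self]; exact zero_mem _
  | X_zero_mul Q ih =>
    obtain ⟨P, hP⟩ := ih
    refine ⟨X 0 * P + rename Fin.succ (elimZero d Q), ?_⟩
    rw [map_add, lambdaDer_X_mul, hP, lambdaDer_rename_succ, elimZero_X_zero_mul, lambdaZero_apply,
      map_neg]
    ring
  | add P Q hP hQ =>
    rw [map_add, map_add, add_sub_add_comm]
    exact add_mem hP hQ

lemma ker_elimZero : (elimZero (n := n) d).ker = (lambdaDer d).range := by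
  ext Q
  refine ⟨fun hQ => ?_, ?_⟩
  · simpa only [(elimZero d).mem_ker.mp hQ, map_zero, sub_zero] using
      sub_rename_succ_elimZero_mem_range d Q
  · rintro ⟨P, rfl⟩
    exact elimZero_lambdaDer d P

lemma elimZero_rename_congr (σ : Perm (Fin (n + 1))) {P Q : MvPolynomial (Fin (n + 1)) R}
    (h : elimZero d P = elimZero d Q) :
    elimZero d (rename σ P) = elimZero d (rename σ Q) := by
  obtain ⟨T, hT⟩ : P - Q ∈ (lambdaDer d).range := by
    rw [← ker_elimZero, AddMonoidHom.mem_ker, map_sub, h, sub_self]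
  rw [← sub_eq_zero, ← map_sub, ← map_sub, ← hT, ← lambdaDer_rename, elimZero_lambdaDer]

end ElimZero

section PermAct

variable {R : Type*} [CommRing R] {n : ℕ} (d : R →+ R)

lemma elimZero_rename_elimZero (σ : Perm (Fin (n + 1))) (P : MvPolynomial (Fin (n + 1)) R) :
    elimZero d (rename (σ ∘ Fin.succ) (elimZero d P)) = elimZero d (rename σ P) := by
  rw [← rename_rename]
  exact elimZero_rename_congr d σ (elimZero_rename_succ d _)

/-- The action of `Sₙ₊₁` on `R[λ₁,…,λₙ]` permuting `λ₀,…,λₙ`, where `λ₀` stands for `Λ₀`. -/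
noncomputable def permAct : Perm (Fin (n + 1)) →* AddMonoid.End (MvPolynomial (Fin n) R) where
  toFun σ := (elimZero d).comp (rename (σ ∘ Fin.succ) : _ →ₐ[R] _).toRingHom.toAddMonoidHom
  map_one' := AddMonoidHom.ext (elimZero_rename_succ d)
  map_mul' σ τ := AddMonoidHom.ext fun Q => by
    have h := elimZero_rename_elimZero d σ (rename (τ ∘ Fin.succ) Q)
    rw [rename_rename] at h
    exact h.symm

lemma permAct_apply (σ : Perm (Fin (n + 1))) (Q : MvPolynomial (Fin n) R) :
    permAct d σ Q = elimZero d (rename (σ ∘ Fin.succ) Q) :=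
  rfl

lemma elimZero_rename (σ : Perm (Fin (n + 1))) (P : MvPolynomial (Fin (n + 1)) R) :
    elimZero d (rename σ P) = permAct d σ (elimZero d P) := by
  rw [permAct_apply, elimZero_rename_elimZero]

lemma permAct_decomposeFin_symm_zero (e : Perm (Fin n)) (Q : MvPolynomial (Fin n) R) :
    permAct d (decomposeFin.symm (0, e)) Q = rename e Q := by
  have hsucc : decomposeFin.symm (0, e) ∘ Fin.succ = Fin.succ ∘ e := by
    ext a
    simp
  rw [permAct_apply, hsucc, ← rename_rename, elimZero_rename_succ]

lemma permAct_swap_monomial (α : Fin n) (m : Fin n →₀ ℕ) (c : R) :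
    permAct d (swap 0 α.succ) (monomial m c) =
      (lambdaZero d ^ m α) (monomial (m.erase α) c) := by
  have hexp : m.mapDomain (swap 0 α.succ ∘ Fin.succ) = (m.erase α).cons (m α) := by
    ext j
    rw [Finsupp.mapDomain_comp, mapDomain_succ, Finsupp.mapDomain_equiv_apply, symm_swap]
    refine Fin.cases ?_ (fun a => ?_) j
    · rw [swap_apply_left, Finsupp.cons_succ, Finsupp.cons_zero]
    rcases eq_or_ne a α with rfl | ha
    · simp
    · rw [swap_apply_of_ne_of_ne (Fin.succ_ne_zero a) (by simpa using ha), Finsupp.cons_succ,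
        Finsupp.cons_succ, Finsupp.erase_ne ha]
  rw [permAct_apply, rename_monomial, hexp, elimZero_monomial, Finsupp.cons_zero,
    Finsupp.tail_cons]

variable {κ : Type*} {S : (Fin (n + 1) → κ) → MvPolynomial (Fin n) R}

/-- The simultaneous action of `σ` on the indices of `S` and on `λ₀ = Λ₀, λ₁, …, λₙ` is by
`sign σ`. -/
def IsSkewAt (S : (Fin (n + 1) → κ) → MvPolynomial (Fin n) R) (σ : Perm (Fin (n + 1))) : Prop :=
  ∀ i, permAct d σ (S (i ∘ σ)) = (sign σ : ℤ) • S i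

variable {d}

lemma IsSkewAt.mul {σ τ : Perm (Fin (n + 1))} (hσ : IsSkewAt d S σ) (hτ : IsSkewAt d S τ) :
    IsSkewAt d S (σ * τ) := fun i => by
  rw [map_mul, AddMonoid.End.coe_mul, Function.comp_apply, coe_mul, ← Function.comp_assoc, hτ,
    map_zsmul, hσ, smul_smul, Perm.sign_mul, mul_comm, Units.val_mul]

lemma decomposeFin_symm_eq_swap_mul (p : Fin (n + 1)) (e : Perm (Fin n)) :
    decomposeFin.symm (p, e) = swap 0 p * decomposeFin.symm (0, e) := by
  ext j
  refine Fin.cases ?_ (fun a => ?_) j <;> simp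

lemma isSkewAt_of_swap_of_decomposeFin (hswap : ∀ α : Fin n, IsSkewAt d S (swap 0 α.succ))
    (hfix : ∀ e : Perm (Fin n), IsSkewAt d S (decomposeFin.symm (0, e)))
    (σ : Perm (Fin (n + 1))) : IsSkewAt d S σ := by
  obtain ⟨⟨p, e⟩, rfl⟩ := decomposeFin.symm.surjective σ
  induction p using Fin.cases with
  | zero => exact hfix e
  | succ α =>
    rw [decomposeFin_symm_eq_swap_mul]
    exact (hswap α).mul (hfix e)

end PermAct

section AlternatingSum

variable {ι κ R : Type*} [Fintype ι] [DecidableEq ι] [CommRing R]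

/-- The sum over all permutations `σ` of `ι` of the `σ`-translates of a family of polynomials, each
weighted by `sign σ`; here `σ` acts both on the indices and on the variables. -/
noncomputable def alternatingSum (g : (ι → κ) → MvPolynomial ι R) (i : ι → κ) :
    MvPolynomial ι R :=
  ∑ σ : Perm ι, (sign σ : ℤ) • rename σ (g (i ∘ σ))

lemma rename_alternatingSum (g : (ι → κ) → MvPolynomial ι R) (τ : Perm ι) (i : ι → κ) :
    rename τ (alternatingSum g (i ∘ τ)) = (sign τ : ℤ) • alternatingSum g i := by
  rw [alternatingSum, alternatingSum, map_sum, Finset.smul_sum,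
    ← Equiv.sum_comp (Equiv.mulLeft τ) fun σ => (sign τ : ℤ) • _ • rename σ (g (i ∘ σ))]
  refine Finset.sum_congr rfl fun σ _ => ?_
  simp only [coe_mulLeft]
  rw [map_zsmul, rename_rename, smul_smul, Perm.sign_mul, Units.val_mul, ← mul_assoc,
    Int.units_coe_mul_self, one_mul, coe_mul, Function.comp_assoc]

lemma elimZero_alternatingSum {n : ℕ} {d : R →+ R}
    {S : (Fin (n + 1) → κ) → MvPolynomial (Fin n) R} (hS : ∀ σ, IsSkewAt d S σ)
    {g : (Fin (n + 1) → κ) → MvPolynomial (Fin (n + 1)) R} (hg : ∀ i, elimZero d (g i) = S i)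
    (i : Fin (n + 1) → κ) :
    elimZero d (alternatingSum g i) = (n + 1).factorial • S i := by
  have hterm : ∀ σ : Perm (Fin (n + 1)),
      elimZero d ((sign σ : ℤ) • rename σ (g (i ∘ σ))) = S i := fun σ => by
    rw [map_zsmul, elimZero_rename, hg, hS σ i, smul_smul, Int.units_coe_mul_self, one_smul]
  rw [alternatingSum, map_sum, Finset.sum_congr rfl fun σ _ => hterm σ, Finset.sum_const,
    Finset.card_univ, Fintype.card_perm, Fintype.card_fin]

end AlternatingSum

section GapOne

variable {ι : Type*}

/-- A tuple whose largest entry is attained once and exceeds the second largest entry by one. -/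
def HasGapOne (m : ι → ℕ) : Prop :=
  ∃ p q, m p = m q + 1 ∧ ∀ j ≠ p, m j ≤ m q

lemma HasGapOne.comp_equiv {m : ι → ℕ} (h : HasGapOne m) {κ : Type*} (e : κ ≃ ι) :
    HasGapOne (m ∘ e) := by
  obtain ⟨p, q, hpq, hq⟩ := h
  refine ⟨e.symm p, e.symm q, by simpa using hpq, fun j hj => ?_⟩
  simpa using hq (e j) fun hej => hj (e.eq_symm_apply.mpr hej)

lemma HasGapOne.gapOne {k : ℕ} {m : Fin (k + 1) → ℕ} (h : HasGapOne m) : gapOne k m := by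
  obtain ⟨p, q, hpq, hq⟩ := h
  have hne : p ≠ q := fun h => by simp [h] at hpq
  have : NeZero k := ⟨by rintro rfl; exact hne (Subsingleton.elim (α := Fin 1) p q)⟩
  let σ : Perm (Fin (k + 1)) := Fin.revPerm.trans (Tuple.sort m)
  have hanti : Antitone fun j => m (σ j) := fun a b hab =>
    Tuple.monotone_sort m (Fin.rev_le_rev.mpr hab)
  have hp : σ 0 = p := by
    by_contra hσ0
    have hle : m (σ (σ.symm p)) ≤ m (σ 0) := hanti (Fin.zero_le _)
    rw [apply_symm_apply] at hle
    have := hq _ hσ0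
    omega
  have hσ1 : σ 1 ≠ p := fun h => one_ne_zero (σ.injective (h.trans hp.symm))
  have hq1 : m (σ (σ.symm q)) ≤ m (σ 1) := hanti <| Fin.one_le_of_ne_zero fun h =>
    hne (hp.symm.trans (σ.symm_apply_eq.mp h).symm)
  rw [apply_symm_apply] at hq1
  exact ⟨σ, hanti, by rw [hp, hpq, (hq _ hσ1).antisymm hq1]⟩

lemma add_single_apply_le {m : ι →₀ ℕ} {N : ℕ} {a : ι} (hm : ∀ j, m j ≤ N) (ha : m a < N)
    (j : ι) : (m + Finsupp.single a 1 : ι →₀ ℕ) j ≤ N := by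
  rcases eq_or_ne j a with rfl | hj
  · simpa using ha
  · simpa [hj] using hm j

lemma hasGapOne_add_single {m : ι →₀ ℕ} {a b : ι} (hab : a ≠ b) (hb : m b = m a)
    (ha : ∀ j, m j ≤ m a) : HasGapOne (m + Finsupp.single a 1 : ι →₀ ℕ) := by
  classical
  refine ⟨a, b, by simp [hab, hb], fun j hj => ?_⟩
  simpa [hab, hj.symm, hb] using ha j

lemma flat_or_hasGapOne_or_peak [Finite ι] [Nonempty ι] (m : ι → ℕ) :
    ∃ p, (∀ j, m j ≤ m p) ∧
      ((∃ q ≠ p, m q = m p) ∨ HasGapOne m ∨ ∀ j ≠ p, m j + 2 ≤ m p) := by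
  obtain ⟨p, hp⟩ := Finite.exists_max m
  refine ⟨p, hp, ?_⟩
  by_contra! ⟨hflat, hgap, q, hqp, hq⟩
  have hlt : ∀ j ≠ p, m j < m p := fun j hj => (hp j).lt_of_ne (hflat j hj)
  have := hlt q hqp
  exact hgap ⟨p, q, by omega, fun j hj => by have := hlt j hj; omega⟩

variable {R : Type*} [CommRing R]

variable (ι R) in
/-- The polynomials all of whose exponents have gap one. -/
noncomputable def gapOnePolynomials : Submodule R (MvPolynomial ι R) :=
  restrictSupport R {m : ι →₀ ℕ | HasGapOne m}

lemma monomial_mem_gapOnePolynomials {m : ι →₀ ℕ} (hm : HasGapOne m) (c : R) :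
    monomial m c ∈ gapOnePolynomials ι R :=
  (monomial_mem_restrictSupport R).mpr (Or.inl hm)

lemma coeff_eq_zero_of_not_hasGapOne {Q : MvPolynomial ι R} (hQ : Q ∈ gapOnePolynomials ι R)
    {m : ι →₀ ℕ} (hm : ¬ HasGapOne m) : coeff m Q = 0 :=
  notMem_support_iff.mp fun h => hm ((mem_restrictSupport_iff R).mp hQ h)

lemma rename_mem_gapOnePolynomials {κ : Type*} (e : ι ≃ κ) {Q : MvPolynomial ι R}
    (hQ : Q ∈ gapOnePolynomials ι R) : rename e Q ∈ gapOnePolynomials κ R := by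
  classical
  refine (mem_restrictSupport_iff R).mpr fun m hm => ?_
  rw [support_rename_of_injective e.injective, Finset.mem_coe, Finset.mem_image] at hm
  obtain ⟨n, hn, rfl⟩ := hm
  have hcomp : ⇑(n.mapDomain e) = n ∘ e.symm := funext (Finsupp.mapDomain_equiv_apply n)
  rw [Set.mem_ofPred_eq, hcomp]
  exact ((mem_restrictSupport_iff R).mp hQ hn).comp_equiv e.symm

lemma alternatingSum_mem_gapOnePolynomials [Fintype ι] [DecidableEq ι] {κ : Type*}
    {g : (ι → κ) → MvPolynomial ι R} (hg : ∀ i, g i ∈ gapOnePolynomials ι R) (i : ι → κ) :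
    alternatingSum g i ∈ gapOnePolynomials ι R :=
  sum_mem fun σ _ => zsmul_mem (rename_mem_gapOnePolynomials σ (hg _)) _

end GapOne

section Reduction

variable {ι R : Type*} [Fintype ι] [CommRing R] (d : R →+ R)

/-- The polynomials congruent to one in `gapOnePolynomials` modulo the image of `lambdaDer d`. -/
noncomputable def gapOneReducible : AddSubgroup (MvPolynomial ι R) :=
  (gapOnePolynomials ι R).toAddSubgroup ⊔ (lambdaDer d).range

variable {d}

lemma monomial_mem_gapOneReducible {m : ι →₀ ℕ} (hm : HasGapOne m) (c : R) :
    monomial m c ∈ gapOneReducible d :=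
  AddSubgroup.mem_sup_left (monomial_mem_gapOnePolynomials hm c)

lemma lambdaDer_mem_gapOneReducible (Q : MvPolynomial ι R) :
    lambdaDer d Q ∈ gapOneReducible d :=
  AddSubgroup.mem_sup_right ⟨Q, rfl⟩

lemma monomial_map_mem_gapOneReducible {m : ι →₀ ℕ} {c : R}
    (h : ∀ a, monomial (m + Finsupp.single a 1) c ∈ gapOneReducible d) :
    monomial m (d c) ∈ gapOneReducible d := by
  have heq : monomial m (d c) =
      lambdaDer d (monomial m c) - ∑ a, monomial (m + Finsupp.single a 1) c := by
    rw [lambdaDer_monomial]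
    abel
  rw [heq]
  exact sub_mem (lambdaDer_mem_gapOneReducible _) (sum_mem fun a _ => h a)

lemma monomial_add_single_mem_gapOneReducible {m : ι →₀ ℕ} {c : R} (p : ι)
    (h : ∀ a ≠ p, monomial (m + Finsupp.single a 1) c ∈ gapOneReducible d)
    (hd : monomial m (d c) ∈ gapOneReducible d) :
    monomial (m + Finsupp.single p 1) c ∈ gapOneReducible d := by
  classical
  have heq : monomial (m + Finsupp.single p 1) c = lambdaDer d (monomial m c) -
      ∑ a ∈ Finset.univ.erase p, monomial (m + Finsupp.single a 1) c - monomial m (d c) := by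
    rw [lambdaDer_monomial, ← Finset.add_sum_erase _ _ (Finset.mem_univ p)]
    abel
  rw [heq]
  exact sub_mem (sub_mem (lambdaDer_mem_gapOneReducible _)
    (sum_mem fun a ha => h a (Finset.ne_of_mem_erase ha))) hd

lemma monomial_mem_gapOneReducible_of_flat (hd : Function.Surjective d) {m : ι →₀ ℕ} {p q : ι}
    (hp : ∀ j, m j ≤ m p) (hqp : q ≠ p) (hq : m q = m p)
    (h : ∀ a b, m a < m p → monomial (m + Finsupp.single a 1) b ∈ gapOneReducible d) (c : R) :
    monomial m c ∈ gapOneReducible d := by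
  obtain ⟨b, rfl⟩ := hd c
  refine monomial_map_mem_gapOneReducible fun a => ?_
  rcases (hp a).lt_or_eq with ha | ha
  · exact h a b ha
  · obtain ⟨r, har, hr⟩ : ∃ r, a ≠ r ∧ m r = m a := by
      rcases eq_or_ne a p with rfl | hap
      exacts [⟨q, hqp.symm, hq⟩, ⟨p, hap, ha.symm⟩]
    exact monomial_mem_gapOneReducible (hasGapOne_add_single har hr (ha ▸ hp)) b

-- Induction on the defect `∑ⱼ (N - mⱼ)`, where `N` bounds the entries of `m`. If the maximum is
-- attained twice, integrating the coefficient raises one exponent: either a gap one appears, or `N`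
-- is still a bound and the defect drops by one. If one entry exceeds all others by two or more,
-- moving one unit off it lowers `N`, and the defect drops by at least `card ι - 1`.
lemma monomial_mem_gapOneReducible_of_lt [Nontrivial ι] (hd : Function.Surjective d) (D : ℕ) :
    ∀ (N : ℕ) (m : ι →₀ ℕ) (c : R), (∀ j, m j ≤ N) → Fintype.card ι * N < m.degree + D →
      monomial m c ∈ gapOneReducible d := by
  induction D with
  | zero =>
    intro N m c hN hlt
    refine absurd hlt (not_lt.mpr ?_)
    rw [Finsupp.degree_eq_sum, add_zero]
    exact Finset.sum_le_card_nsmul _ _ _ fun j _ => hN j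
  | succ D ih =>
    intro N m c hN hlt
    obtain ⟨p, hp, ⟨q, hqp, hq⟩ | hgap | hpeak⟩ := flat_or_hasGapOne_or_peak m
    · refine monomial_mem_gapOneReducible_of_flat hd hp hqp hq (fun a b ha => ?_) c
      exact ih N _ b (add_single_apply_le hN (ha.trans_le (hN p)))
        (by rw [map_add, Finsupp.degree_single]; omega)
    · exact monomial_mem_gapOneReducible hgap c
    · have hcard : 2 ≤ Fintype.card ι := Fintype.one_lt_card
      obtain ⟨n, rfl⟩ : ∃ n, m = n + Finsupp.single p 1 := by
        obtain ⟨q, hqp⟩ := exists_ne p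
        have := hpeak q hqp
        exact ⟨m - Finsupp.single p 1,
          (tsub_add_cancel_of_le (Finsupp.single_le_iff.mpr (by omega))).symm⟩
      obtain ⟨N, rfl⟩ : ∃ N', N = N' + 1 :=
        Nat.exists_eq_add_one.mpr (lt_of_lt_of_le (by simp) (hN p))
      have hnp : n p ≤ N := by simpa using hN p
      have hlt_of_ne : ∀ j ≠ p, n j < N := fun j hj => by
        have : n j + 2 ≤ n p + 1 := by simpa [hj] using hpeak j hj
        omega
      have hnN : ∀ j, n j ≤ N := fun j => by
        rcases eq_or_ne j p with rfl | hj
        exacts [hnp, (hlt_of_ne j hj).le]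
      rw [map_add, Finsupp.degree_single, mul_add] at hlt
      refine monomial_add_single_mem_gapOneReducible p (fun a ha => ?_) (ih N n _ hnN (by omega))
      exact ih N _ c (add_single_apply_le hnN (hlt_of_ne a ha))
        (by rw [map_add, Finsupp.degree_single]; omega)

lemma gapOneReducible_eq_top [Nontrivial ι] (hd : Function.Surjective d) :
    gapOneReducible (ι := ι) d = ⊤ := by
  refine eq_top_iff.mpr fun Q _ => ?_
  induction Q using MvPolynomial.induction_on' with
  | monomial m c =>
    exact monomial_mem_gapOneReducible_of_lt hd (Fintype.card ι * m.degree + 1) m.degree m c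
      (fun j => Finsupp.le_degree j m) (by omega)
  | add P Q hP hQ => exact add_mem (hP trivial) (hQ trivial)

lemma exists_gapOne_elimZero_eq {n : ℕ} [NeZero n] (hd : Function.Surjective d)
    (Q : MvPolynomial (Fin n) R) :
    ∃ P ∈ gapOnePolynomials (Fin (n + 1)) R, elimZero d P = Q := by
  have : Nontrivial (Fin (n + 1)) := ⟨0, 1, zero_ne_one⟩
  have hmem : rename Fin.succ Q ∈ gapOneReducible d :=
    gapOneReducible_eq_top (ι := Fin (n + 1)) hd ▸ AddSubgroup.mem_top _
  obtain ⟨P, hP, _, ⟨T, rfl⟩, hsum⟩ := AddSubgroup.mem_sup.mp hmem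
  refine ⟨P, hP, ?_⟩
  rw [← elimZero_rename_succ d Q, ← hsum, map_add, elimZero_lambdaDer, add_zero]

end Reduction

section TotallySkewsym

variable {F : Type*} [Field F] {d : F →+ F} {k l : ℕ}

lemma lamZero_iterate (j : ℕ) (Q : MvPolynomial (Fin k) F) :
    (lamZero d)^[j] Q = (lambdaZero d ^ j) Q := by
  have hlam : (lamZero d : MvPolynomial (Fin k) F → _) = lambdaZero d := funext fun Q => by
    have hcoeff : coeffDer d Q = mapCoeff d Q :=
      (coeffLift_apply (fun m => (monomial m).toAddMonoidHom.comp d) Q).symm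
    rw [lamZero, lambdaZero_apply, lambdaDer_apply, hcoeff, neg_add']
  rw [hlam, AddMonoid.End.coe_pow]

lemma tauAct_eq_permAct (α : Fin k) (S : (Fin (k + 1) → Fin l) → MvPolynomial (Fin k) F)
    (i : Fin (k + 1) → Fin l) :
    tauAct d α S i = permAct d (swap 0 α.succ) (S (i ∘ swap 0 α.succ)) := by
  conv_rhs => rw [← support_sum_monomial_coeff (S (i ∘ swap 0 α.succ))]
  simp only [map_sum, permAct_swap_monomial, ← lamZero_iterate]
  rfl

lemma isSkewAt_of_isSkewsym_of_tauAct {S : (Fin (k + 1) → Fin l) → MvPolynomial (Fin k) F}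
    (hskew : IsSkewsym S) (htau : ∀ α i, tauAct d α S i = -S i) (σ : Perm (Fin (k + 1))) :
    IsSkewAt d S σ := by
  refine isSkewAt_of_swap_of_decomposeFin (fun α i => ?_) (fun e i => ?_) σ
  · rw [← tauAct_eq_permAct, htau, sign_swap (Fin.succ_ne_zero α).symm, Units.val_neg,
      Units.val_one, neg_one_smul]
  · have hcons : i ∘ decomposeFin.symm (0, e) = Fin.cons (i 0) fun a => i (e a).succ := by
      ext1 j
      refine Fin.cases ?_ (fun a => ?_) j <;> simp
    rw [permAct_decomposeFin_symm_zero, hcons, hskew, decomposeFin.symm_sign, if_pos rfl, one_mul]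

lemma exists_skew_gapOne_elimZero_eq [NeZero k] {κ : Type*} (hd : Function.Surjective d)
    (hfac : ((k + 1).factorial : F) ≠ 0) {S : (Fin (k + 1) → κ) → MvPolynomial (Fin k) F}
    (hS : ∀ σ, IsSkewAt d S σ) :
    ∃ B : (Fin (k + 1) → κ) → MvPolynomial (Fin (k + 1)) F,
      (∀ i, B i ∈ gapOnePolynomials (Fin (k + 1)) F) ∧ (∀ i, elimZero d (B i) = S i) ∧
      ∀ (σ : Perm (Fin (k + 1))) i, rename σ (B (i ∘ σ)) = (sign σ : ℤ) • B i := by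
  choose g hgap hg using fun i => exists_gapOne_elimZero_eq hd (S i)
  refine ⟨fun i => ((k + 1).factorial : F)⁻¹ • alternatingSum g i,
    fun i => Submodule.smul_mem _ _ (alternatingSum_mem_gapOnePolynomials hgap i),
    fun i => ?_, fun σ i => ?_⟩
  · rw [map_inv_natCast_smul _ F F, elimZero_alternatingSum hS hg, ← Nat.cast_smul_eq_nsmul F,
      inv_smul_smul₀ hfac]
  · rw [map_smul, rename_alternatingSum, smul_comm]

lemma elimZero_eq_sum {P : MvPolynomial (Fin (k + 1)) F} {M : ℕ} (hP : P.totalDegree ≤ M) :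
    elimZero d P = ∑ m : Fin (k + 1) → Fin (M + 1),
      (lamZero d)^[m 0]
        (monomial (Finsupp.equivFunOnFinite.symm fun a : Fin k => (m a.succ : ℕ))
          (coeff (Finsupp.equivFunOnFinite.symm fun j => (m j : ℕ)) P)) := by
  conv_lhs =>
    rw [eq_sum_monomial_of_degreeOf_le fun a => (degreeOf_le_totalDegree P a).trans hP]
  simp only [map_sum, elimZero_monomial, lamZero_iterate]
  rfl

lemma coeff_equivFunOnFinite_symm_comp {ι R : Type*} [Finite ι] [CommSemiring R] (σ : Perm ι)
    (m : ι → ℕ) (Q : MvPolynomial ι R) :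
    coeff (Finsupp.equivFunOnFinite.symm (m ∘ σ)) Q =
      coeff (Finsupp.equivFunOnFinite.symm m) (rename σ Q) := by
  rw [← coeff_rename_mapDomain σ σ.injective]
  congr 1
  ext j
  simp [Finsupp.mapDomain_equiv_apply]

end TotallySkewsym

end PolydifferentialOperator

open PolydifferentialOperator in
theorem stmt_12_general {F : Type*} [Field F] (d : F →+ F) (hsurj : Function.Surjective d)
    {k l : ℕ} (hk : 1 ≤ k) (hfac : ((k + 1).factorial : F) ≠ 0)
    (S : (Fin (k + 1) → Fin l) → MvPolynomial (Fin k) F) (hSskew : IsSkewsym S)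
    (hStot : ∀ (α : Fin k) (i : Fin (k + 1) → Fin l), tauAct d α S i = -S i) :
    ∃ (M : ℕ) (s : (Fin (k + 1) → ℕ) → (Fin (k + 1) → Fin l) → F),
      (∀ m i, ¬ gapOne k m → s m i = 0) ∧
      (∀ (σ : Equiv.Perm (Fin (k + 1))) (m : Fin (k + 1) → ℕ) (i : Fin (k + 1) → Fin l),
        s (fun j => m (σ j)) (fun j => i (σ j)) = (Equiv.Perm.sign σ : ℤ) • s m i) ∧
      (∀ i : Fin (k + 1) → Fin l,
        S i = ∑ m : Fin (k + 1) → Fin (M + 1),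
          (lamZero d)^[(m 0 : ℕ)]
            ((MvPolynomial.monomial
                (Finsupp.equivFunOnFinite.symm fun a : Fin k => (m a.succ : ℕ)))
              (s (fun j => (m j : ℕ)) i))) := by
  have : NeZero k := ⟨Nat.one_le_iff_ne_zero.mp hk⟩
  obtain ⟨B, hgap, hB, hskew⟩ :=
    exists_skew_gapOne_elimZero_eq hsurj hfac (isSkewAt_of_isSkewsym_of_tauAct hSskew hStot)
  refine ⟨Finset.univ.sup fun i => (B i).totalDegree,
    fun m i => MvPolynomial.coeff (Finsupp.equivFunOnFinite.symm m) (B i),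
    fun m i hm => coeff_eq_zero_of_not_hasGapOne (hgap i) fun h => hm h.gapOne,
    fun σ m i => ?_, fun i => ?_⟩
  · exact (coeff_equivFunOnFinite_symm_comp σ m _).trans
      (by rw [← MvPolynomial.coeff_smul, ← hskew]; rfl)
  · rw [← hB i]
    exact elimZero_eq_sum (Finset.le_sup (f := fun i => (B i).totalDegree) (Finset.mem_univ i))

/-- Let `F` be a differential field of characteristic zero with surjective derivation
`d`, and let `k ≥ 1`.  Every totally skewsymmetric `k`-differential operator `S` on `F^ℓ`
admits a decomposition
`S_{i_0,…,i_k} = Σ_{(m_0,…,m_k)} Λ₀^{m_0} (λ_1^{m_1}⋯λ_k^{m_k} · s^{m_0,…,m_k}_{i_0,…,i_k})`,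
where the sum ranges over tuples in `{0,…,M}^{k+1}` whose non-increasing rearrangement
satisfies `μ_0 − μ_1 = 1`, and the coefficients `s` are skewsymmetric with respect to
simultaneous permutations of the upper and lower indices. -/
theorem stmt_12 (F : Type*) [Field F] [CharZero F] (d : F → F) (hd : IsDerivation d)
    (hsurj : Function.Surjective d)
    (k l : ℕ) (hk : 1 ≤ k) (hl : 0 < l)
    (S : (Fin (k + 1) → Fin l) → MvPolynomial (Fin k) F)
    (hSskew : IsSkewsym S)
    (hStot : ∀ (α : Fin k) (i : Fin (k + 1) → Fin l), tauAct d α S i = - S i) :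
    ∃ (M : ℕ) (s : (Fin (k + 1) → ℕ) → (Fin (k + 1) → Fin l) → F),
      (∀ m i, ¬ gapOne k m → s m i = 0) ∧
      (∀ (σ : Equiv.Perm (Fin (k + 1))) (m : Fin (k + 1) → ℕ) (i : Fin (k + 1) → Fin l),
        s (fun j => m (σ j)) (fun j => i (σ j)) = (Equiv.Perm.sign σ : ℤ) • s m i) ∧
      (∀ i : Fin (k + 1) → Fin l,
        S i = ∑ m : Fin (k + 1) → Fin (M + 1),
          (lamZero d)^[(m 0 : ℕ)]
            ((MvPolynomial.monomial
                (Finsupp.equivFunOnFinite.symm fun a : Fin k => (m a.succ : ℕ)))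
              (s (fun j => (m j : ℕ)) i))) :=
  stmt_12_general (AddMonoidHom.mk' d hd.map_add) hsurj hk
    (Nat.cast_ne_zero.mpr (k + 1).factorial_ne_zero) S hSskew hStot
end
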